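/- Let G be a cactus with k cycles and m edges that contains a cut edge which is not a pendant edge, where all relevant quantities are as in the standard setup. Then Sz*_e(G) ≥ f(4,…,4) + m − 2 (f evaluated at k quadrangles), with equality if and only if G ≅ G*_1, the graph obtained from the bundle C_1(n−1,k) of k quadrangles by attaching a pendant edge at one of its pendant vertices. -/

import Mathlib

open scoped Classical
open Finset

noncomputable def eDist {V : Type*} (G : SimpleGraph V) (f : Sym2 V) (w : V) : ℕ :=
  Sym2.lift ⟨fun a b => min (G.dist a w) (G.dist b w), fun _ _ => min_comm _ _⟩ f

noncomputable def mCloser {V : Type*} (G : SimpleGraph V) [Fintype V] (u v : V) : ℕ :=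
  (G.edgeFinset.filter fun f => eDist G f u < eDist G f v).card

noncomputable def mEqui {V : Type*} (G : SimpleGraph V) [Fintype V] (u v : V) : ℕ :=
  (G.edgeFinset.filter fun f => eDist G f u = eDist G f v).card

/-- The edge revised Szeged index (each edge `uv` is counted once; the double sum over
ordered adjacent pairs counts it twice, whence the division by 2). -/
noncomputable def szRevE {V : Type*} (G : SimpleGraph V) [Fintype V] : ℚ :=
  (∑ u : V, ∑ v : V, if G.Adj u v then
      ((mCloser G u v : ℚ) + (mEqui G u v : ℚ) / 2) *
        ((mCloser G v u : ℚ) + (mEqui G u v : ℚ) / 2)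
    else 0) / 2

/-- The edges of `G` lying in the connected component `c`. -/
noncomputable def compEdges {V : Type*} (G : SimpleGraph V) [Fintype V]
    (c : G.ConnectedComponent) : Finset (Sym2 V) :=
  G.edgeFinset.filter fun f => ∀ x ∈ f, G.connectedComponentMk x = c

/-- A cactus: a connected graph in which any two (edge-)distinct cycles share
at most one vertex. -/
def IsCactus {V : Type*} (G : SimpleGraph V) : Prop :=
  G.Connected ∧ ∀ ⦃a b : V⦄ (p : G.Walk a a) (q : G.Walk b b),
    p.IsCycle → q.IsCycle → p.edges.toFinset ≠ q.edges.toFinset →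
    (p.support.toFinset ∩ q.support.toFinset).card ≤ 1

/-- The bundle `G(len 0, …, len (k-1))`: `k` cycles of the given lengths all sharing a single
common hub vertex, together with `p` pendant edges attached at the hub. -/
def bundleGraph (k : ℕ) (len : Fin k → ℕ) (p : ℕ) :
    SimpleGraph (Unit ⊕ ((Σ i : Fin k, Fin (len i - 1)) ⊕ Fin p)) :=
  SimpleGraph.fromRel fun x y =>
    match x, y with
    | Sum.inl _, Sum.inr (Sum.inr _) => True
    | Sum.inl _, Sum.inr (Sum.inl ⟨i, a⟩) => a.val = 0 ∨ a.val = len i - 2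
    | Sum.inr (Sum.inl ⟨i, a⟩), Sum.inr (Sum.inl ⟨j, b⟩) => i = j ∧ a.val + 1 = b.val
    | _, _ => False

/-- `G*₁`: the bundle of `k` quadrangles on a hub, `n - 3k - 3` pendant edges at the hub,
and a pendant path of length 2 at the hub (i.e. `C₁(n-1,k)` with a pendant edge attached
to one of its pendant vertices). -/
def GStar1 (n k : ℕ) :
    SimpleGraph (Unit ⊕ ((Σ _ : Fin k, Fin 3) ⊕ (Fin (n - 3 * k - 3) ⊕ Fin 2))) :=
  SimpleGraph.fromRel fun x y =>
    match x, y with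
    | Sum.inl _, Sum.inr (Sum.inr (Sum.inl _)) => True
    | Sum.inl _, Sum.inr (Sum.inr (Sum.inr b)) => b.val = 0
    | Sum.inr (Sum.inr (Sum.inr a)), Sum.inr (Sum.inr (Sum.inr b)) => a.val = 0 ∧ b.val = 1
    | Sum.inl _, Sum.inr (Sum.inl ⟨_, a⟩) => a.val = 0 ∨ a.val = 2
    | Sum.inr (Sum.inl ⟨i, a⟩), Sum.inr (Sum.inl ⟨j, b⟩) => i = j ∧ a.val + 1 = b.val
    | _, _ => False

/-!
Write `D u` for the sum of the distances from `u` to all edges. For an edge `uv` the distances to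
any edge differ by at most one, so the term of `uv` in `Sz*ₑ` is `(m² - (D u - D v)²) / 4`. A
pendant edge gives `(2m - 1) / 4`; call the rest, `((m - 1)² - (D u - D v)²) / 4`, the excess of the
edge. It is nonnegative, and at least `m - 2` if both ends have degree at least two.

Removing the edges of a cycle of length `r` of a cactus leaves its vertices in distinct components,
so distances to an edge of the cycle are those in the cycle alone. By rotation, the sum of the
distances to the edges of the cycle is the same at all its vertices, whence `|D u - D v| ≤ m - r`
along the cycle. This bounds the total excess of a cycle below by `6m - 15`, with equality only for
quadrangles.

If equality holds, `|D u - D v| = m - 4` along every cycle, which forces it to be attached to the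
rest of the graph at a single vertex. One end of the given cut edge has only one further edge, a
pendant one; all remaining cut edges are pendant edges at the other end, which is the common vertex
of the quadrangles.
-/

section EdgeDistance

variable {V : Type*} {G : SimpleGraph V} {u v w : V}

@[simp]
lemma eDist_mk (a b w : V) : eDist G s(a, b) w = min (G.dist a w) (G.dist b w) := rfl

lemma eDist_eq_zero_iff (hc : G.Connected) {f : Sym2 V} : eDist G f w = 0 ↔ w ∈ f := by
  induction f with
  | _ a b =>
    rw [eDist_mk, Nat.min_eq_zero_iff, hc.dist_eq_zero_iff, hc.dist_eq_zero_iff, Sym2.mem_iff,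
      eq_comm, @eq_comm _ b]

lemma dist_le_dist_add_one_of_adj (hc : G.Connected) (h : G.Adj u v) (a : V) :
    G.dist a u ≤ G.dist a v + 1 :=
  SimpleGraph.dist_eq_one_iff_adj.2 h.symm ▸ hc.dist_triangle

lemma eDist_le_eDist_add_one_of_adj (hc : G.Connected) (h : G.Adj u v) (f : Sym2 V) :
    eDist G f u ≤ eDist G f v + 1 := by
  induction f with
  | _ a b =>
    simpa only [eDist_mk, min_add_add_right] using
      min_le_min (dist_le_dist_add_one_of_adj hc h a) (dist_le_dist_add_one_of_adj hc h b)

lemma eDist_eq_one_of_adj (hc : G.Connected) (h : G.Adj u v) {a : V} (hav : v ≠ a) :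
    eDist G s(u, a) v = 1 := by
  have hle := eDist_le_eDist_add_one_of_adj hc h.symm s(u, a)
  rw [(eDist_eq_zero_iff hc).2 (Sym2.mem_mk_left u a)] at hle
  have hne : eDist G s(u, a) v ≠ 0 := by
    rw [Ne, eDist_eq_zero_iff hc, Sym2.mem_iff]
    exact not_or.2 ⟨h.ne', hav⟩
  omega

lemma abs_eDist_sub_le_one (hc : G.Connected) (h : G.Adj u v) (f : Sym2 V) :
    |(eDist G f u : ℚ) - eDist G f v| ≤ 1 := by
  rw [abs_sub_le_iff, sub_le_iff_le_add', sub_le_iff_le_add']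
  have huv := eDist_le_eDist_add_one_of_adj hc h f
  have hvu := eDist_le_eDist_add_one_of_adj hc h.symm f
  constructor <;> norm_cast

end EdgeDistance

section EdgeSums

variable {V W M : Type*} [Fintype V] [AddCommMonoid M]

/-- A relation `R` orients `G` along `φ` when every edge of `G` joins the images of exactly one
pair related by `R`. -/
structure IsOrientation (G : SimpleGraph V) (φ : W ≃ V) (R : W → W → Prop) : Prop where
  adj_iff : ∀ a b, G.Adj (φ a) (φ b) ↔ R a b ∨ R b a
  asymm : ∀ a b, R a b → ¬ R b a

lemma IsOrientation.sum_edgeFinset [Fintype W] {G : SimpleGraph V} {φ : W ≃ V}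
    {R : W → W → Prop} (hR : IsOrientation G φ R) (g : Sym2 V → M) :
    ∑ e ∈ G.edgeFinset, g e = ∑ a, ∑ b, if R a b then g s(φ a, φ b) else 0 := by
  rw [← Fintype.sum_prod_type' fun a b => if R a b then g s(φ a, φ b) else 0, ← sum_filter]
  refine (sum_bij (fun p _ => s(φ p.1, φ p.2)) ?_ ?_ ?_ fun _ _ => rfl).symm
  · rintro ⟨a, b⟩ h
    simpa [hR.adj_iff] using Or.inl (mem_filter.1 h).2
  · rintro ⟨a, b⟩ hab ⟨a', b'⟩ hab' h
    rcases Sym2.eq_iff.1 h with ⟨ha, hb⟩ | ⟨ha, hb⟩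
    · exact Prod.ext (φ.injective ha) (φ.injective hb)
    · obtain rfl : a = b' := φ.injective ha
      obtain rfl : b = a' := φ.injective hb
      exact absurd (mem_filter.1 hab').2 (hR.asymm _ _ (mem_filter.1 hab).2)
  · intro e he
    induction e with
    | _ u v =>
      obtain ⟨a, rfl⟩ := φ.surjective u
      obtain ⟨b, rfl⟩ := φ.surjective v
      rw [SimpleGraph.mem_edgeFinset, SimpleGraph.mem_edgeSet, hR.adj_iff] at he
      rcases he with h | h
      · exact ⟨(a, b), by simpa using h, rfl⟩
      · exact ⟨(b, a), by simpa using h, Sym2.eq_swap⟩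

lemma sum_adj_eq_two_nsmul_sum_edgeFinset (G : SimpleGraph V) (g : Sym2 V → M) :
    (∑ u, ∑ v, if G.Adj u v then g s(u, v) else 0) = 2 • ∑ e ∈ G.edgeFinset, g e := by
  rw [← Fintype.sum_prod_type' fun u v => if G.Adj u v then g s(u, v) else 0, ← sum_filter,
    smul_sum, ← sum_fiberwise_of_maps_to (t := G.edgeFinset) (g := fun p : V × V => s(p.1, p.2))]
  · refine sum_congr rfl fun e he => ?_
    induction e with
    | _ a b =>
      have hab : G.Adj a b := by simpa using he
      have hfiber : ((univ : Finset (V × V)).filter fun p => G.Adj p.1 p.2).filter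
          (fun p => s(p.1, p.2) = s(a, b)) = {(a, b), (b, a)} := by
        ext ⟨p, q⟩
        simp only [mem_filter, mem_univ, true_and, mem_insert, mem_singleton, Prod.mk.injEq,
          Sym2.eq_iff]
        refine ⟨And.right, ?_⟩
        rintro (⟨rfl, rfl⟩ | ⟨rfl, rfl⟩)
        exacts [⟨hab, by simp⟩, ⟨hab.symm, by simp⟩]
      rw [hfiber, sum_pair fun h => hab.ne (Prod.mk.inj h).1, Sym2.eq_swap (a := b), two_nsmul]
  · intro p hp
    simpa using hp

end EdgeSums

section Excess

variable {V : Type*} [Fintype V] {G : SimpleGraph V} {u v : V}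

/-- The sum of the distances from the vertex `w` to all edges of `G`; edges contribute to the edge
revised Szeged index through the differences of this function. It takes rational values only to
avoid casts. -/
noncomputable def edgeTransmission (G : SimpleGraph V) (w : V) : ℚ :=
  ∑ f ∈ G.edgeFinset, (eDist G f w : ℚ)

/-- The amount by which the contribution of the edge `e` to the edge revised Szeged index exceeds
`(2 * #E - 1) / 4`, the contribution of a pendant edge. -/
noncomputable def excess (G : SimpleGraph V) (e : Sym2 V) : ℚ :=
  Sym2.lift ⟨fun u v => (((#G.edgeFinset : ℚ) - 1) ^ 2 -
    (edgeTransmission G u - edgeTransmission G v) ^ 2) / 4, fun u v => by ring⟩ e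

lemma excess_mk (u v : V) : excess G s(u, v) = (((#G.edgeFinset : ℚ) - 1) ^ 2 -
    (edgeTransmission G u - edgeTransmission G v) ^ 2) / 4 := rfl

lemma edgeTransmission_sub (u v : V) : edgeTransmission G u - edgeTransmission G v =
    ∑ f ∈ G.edgeFinset, ((eDist G f u : ℚ) - eDist G f v) :=
  (sum_sub_distrib ..).symm

lemma mCloser_sub_mCloser (hc : G.Connected) (h : G.Adj u v) :
    (mCloser G v u : ℚ) - mCloser G u v = edgeTransmission G u - edgeTransmission G v := by
  rw [edgeTransmission_sub, mCloser, mCloser, card_filter, card_filter]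
  push_cast
  rw [← sum_sub_distrib]
  refine sum_congr rfl fun f _ => ?_
  have huv := eDist_le_eDist_add_one_of_adj hc h f
  have hvu := eDist_le_eDist_add_one_of_adj hc h.symm f
  obtain hf | hf | hf : eDist G f u = eDist G f v ∨ eDist G f u = eDist G f v + 1 ∨
    eDist G f v = eDist G f u + 1 := by omega
  all_goals simp [hf]

lemma mCloser_add_mCloser_add_mEqui (u v : V) :
    mCloser G u v + mCloser G v u + mEqui G u v = #G.edgeFinset := by
  rw [mCloser, mCloser, mEqui, card_filter, card_filter, card_filter, ← sum_add_distrib,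
    ← sum_add_distrib, card_eq_sum_ones]
  refine sum_congr rfl fun f _ => ?_
  split_ifs <;> omega

lemma szRevE_eq (hc : G.Connected) : szRevE G =
    (2 * (#G.edgeFinset : ℚ) ^ 2 - #G.edgeFinset) / 4 + ∑ e ∈ G.edgeFinset, excess G e := by
  have hterm (u v : V) (h : G.Adj u v) : ((mCloser G u v : ℚ) + (mEqui G u v : ℚ) / 2) *
      ((mCloser G v u : ℚ) + (mEqui G u v : ℚ) / 2) =
      (2 * (#G.edgeFinset : ℚ) - 1) / 4 + excess G s(u, v) := by
    have hadd : (mCloser G u v + mCloser G v u + mEqui G u v : ℚ) = #G.edgeFinset := by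
      exact_mod_cast mCloser_add_mCloser_add_mEqui u v
    rw [excess_mk, ← mCloser_sub_mCloser hc h, ← hadd]
    ring
  have hsum : szRevE G = (∑ u, ∑ v, if G.Adj u v then
      (2 * (#G.edgeFinset : ℚ) - 1) / 4 + excess G s(u, v) else 0) / 2 := by
    refine congrArg (· / 2) (sum_congr rfl fun u _ => sum_congr rfl fun v _ => ?_)
    split_ifs with h
    exacts [hterm u v h, rfl]
  rw [hsum, sum_adj_eq_two_nsmul_sum_edgeFinset G
    (fun e => (2 * (#G.edgeFinset : ℚ) - 1) / 4 + excess G e), sum_add_distrib, sum_const]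
  simp only [nsmul_eq_mul]
  push_cast
  ring

end Excess

section Balanced

variable {V : Type*} [Fintype V] {G : SimpleGraph V} {u v : V} {B : Finset (Sym2 V)}

lemma edgeTransmission_sub_eq_sum_sdiff (hB : B ⊆ G.edgeFinset)
    (hbal : ∑ f ∈ B, (eDist G f u : ℚ) = ∑ f ∈ B, (eDist G f v : ℚ)) :
    edgeTransmission G u - edgeTransmission G v =
      ∑ f ∈ G.edgeFinset \ B, ((eDist G f u : ℚ) - eDist G f v) := by
  rw [edgeTransmission_sub, ← sum_sdiff hB, sum_sub_distrib (s := B), hbal, sub_self, add_zero]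

lemma card_edgeFinset_sdiff (hB : B ⊆ G.edgeFinset) :
    (#(G.edgeFinset \ B) : ℚ) = #G.edgeFinset - #B := by
  rw [card_sdiff_of_subset hB, Nat.cast_sub (card_le_card hB)]

lemma abs_edgeTransmission_sub_le (hc : G.Connected) (h : G.Adj u v) (hB : B ⊆ G.edgeFinset)
    (hbal : ∑ f ∈ B, (eDist G f u : ℚ) = ∑ f ∈ B, (eDist G f v : ℚ)) :
    |edgeTransmission G u - edgeTransmission G v| ≤ #G.edgeFinset - #B := by
  rw [edgeTransmission_sub_eq_sum_sdiff hB hbal, ← card_edgeFinset_sdiff hB, ← nsmul_one]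
  exact (abs_sum_le_sum_abs _ _).trans
    (sum_le_card_nsmul _ _ _ fun f _ => abs_eDist_sub_le_one hc h f)

lemma eDist_eq_add_one_of_edgeTransmission_sub_eq (hc : G.Connected) (h : G.Adj u v)
    (hB : B ⊆ G.edgeFinset)
    (hbal : ∑ f ∈ B, (eDist G f u : ℚ) = ∑ f ∈ B, (eDist G f v : ℚ))
    (heq : edgeTransmission G u - edgeTransmission G v = #G.edgeFinset - #B)
    {f : Sym2 V} (hf : f ∈ G.edgeFinset) (hfB : f ∉ B) : eDist G f u = eDist G f v + 1 := by
  have hle : ∀ f ∈ G.edgeFinset \ B, (eDist G f u : ℚ) - eDist G f v ≤ 1 := fun f _ =>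
    (abs_le.1 (abs_eDist_sub_le_one hc h f)).2
  rw [edgeTransmission_sub_eq_sum_sdiff hB hbal, ← card_edgeFinset_sdiff hB, ← nsmul_one,
    ← sum_const, sum_eq_sum_iff_of_le hle] at heq
  have hfuv := heq f (mem_sdiff.2 ⟨hf, hfB⟩)
  rw [sub_eq_iff_eq_add'] at hfuv
  exact_mod_cast hfuv

lemma eDist_eq_add_one_or_of_sq_eq (hc : G.Connected) (h : G.Adj u v) (hB : B ⊆ G.edgeFinset)
    (hbal : ∑ f ∈ B, (eDist G f u : ℚ) = ∑ f ∈ B, (eDist G f v : ℚ))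
    (heq : (edgeTransmission G u - edgeTransmission G v) ^ 2 = (#G.edgeFinset - #B : ℚ) ^ 2) :
    (∀ f ∈ G.edgeFinset, f ∉ B → eDist G f u = eDist G f v + 1) ∨
      (∀ f ∈ G.edgeFinset, f ∉ B → eDist G f v = eDist G f u + 1) := by
  rcases sq_eq_sq_iff_eq_or_eq_neg.1 heq with h1 | h1
  · exact .inl fun f => eDist_eq_add_one_of_edgeTransmission_sub_eq hc h hB hbal h1
  · exact .inr fun f => eDist_eq_add_one_of_edgeTransmission_sub_eq hc h.symm hB hbal.symm
      (by linarith)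

lemma mk_mem_or_mk_mem_of_sq_eq (hc : G.Connected) (h : G.Adj u v) (hB : B ⊆ G.edgeFinset)
    (hbal : ∑ f ∈ B, (eDist G f u : ℚ) = ∑ f ∈ B, (eDist G f v : ℚ))
    (heq : (edgeTransmission G u - edgeTransmission G v) ^ 2 = (#G.edgeFinset - #B : ℚ) ^ 2) :
    (∀ w, G.Adj u w → s(u, w) ∈ B) ∨ (∀ w, G.Adj v w → s(v, w) ∈ B) := by
  have key {u' v' : V} (hd : ∀ f ∈ G.edgeFinset, f ∉ B → eDist G f u' = eDist G f v' + 1)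
      (w : V) (hw : G.Adj u' w) : s(u', w) ∈ B := by
    by_contra hB'
    have := hd _ (by simpa using hw) hB'
    rw [(eDist_eq_zero_iff hc).2 (Sym2.mem_mk_left u' w)] at this
    omega
  exact (eDist_eq_add_one_or_of_sq_eq hc h hB hbal heq).imp key key

end Balanced

section EdgeExcess

variable {V : Type*} {G : SimpleGraph V} {x y a b : V}

/-- The vertex `l` is an endpoint of a pendant edge of `G` attached at the vertex `x`. -/
structure IsLeafAt (G : SimpleGraph V) (x l : V) : Prop where
  adj : G.Adj x l
  eq_of_adj : ∀ w, G.Adj l w → w = x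

lemma sum_eDist_singleton_balanced (hc : G.Connected) (x y : V) :
    ∑ f ∈ {s(x, y)}, (eDist G f x : ℚ) = ∑ f ∈ {s(x, y)}, (eDist G f y : ℚ) := by
  rw [sum_singleton, sum_singleton, (eDist_eq_zero_iff hc).2 (Sym2.mem_mk_left x y),
    (eDist_eq_zero_iff hc).2 (Sym2.mem_mk_right x y)]

lemma threePath_edges_ne (h : G.Adj x y) (hay : a ≠ y) (hbx : b ≠ x) :
    s(x, y) ≠ s(x, a) ∧ s(x, y) ≠ s(y, b) ∧ s(x, a) ≠ s(y, b) :=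
  ⟨mt Sym2.congr_right.1 hay.symm, by rw [Sym2.eq_swap]; exact mt Sym2.congr_right.1 hbx.symm,
    by simp [h.ne, hbx.symm]⟩

lemma card_threePath (h : G.Adj x y) (hay : a ≠ y) (hbx : b ≠ x) :
    #({s(x, y), s(x, a), s(y, b)} : Finset (Sym2 V)) = 3 :=
  have ⟨hne₁, hne₂, hne₃⟩ := threePath_edges_ne h hay hbx
  card_eq_three.2 ⟨_, _, _, hne₁, hne₂, hne₃, rfl⟩

lemma sum_eDist_threePath_balanced (hc : G.Connected) (h : G.Adj x y) (hay : a ≠ y)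
    (hbx : b ≠ x) : ∑ f ∈ {s(x, y), s(x, a), s(y, b)}, (eDist G f x : ℚ) =
      ∑ f ∈ {s(x, y), s(x, a), s(y, b)}, (eDist G f y : ℚ) := by
  obtain ⟨hne₁, hne₂, hne₃⟩ := threePath_edges_ne h hay hbx
  have hzero (u v : V) : eDist G s(u, v) u = 0 :=
    (eDist_eq_zero_iff hc).2 (Sym2.mem_mk_left u v)
  rw [sum_insert (by simp [hne₁, hne₂]), sum_insert (by simp [hne₃]), sum_singleton,
    sum_insert (by simp [hne₁, hne₂]), sum_insert (by simp [hne₃]), sum_singleton,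
    hzero x y, hzero x a, hzero y b, eDist_eq_one_of_adj hc h hay.symm,
    eDist_eq_one_of_adj hc h.symm hbx.symm, Sym2.eq_swap, hzero y x]
  simp

variable [Fintype V]

lemma excess_nonneg (hc : G.Connected) (h : G.Adj x y) : 0 ≤ excess G s(x, y) := by
  have habs := abs_edgeTransmission_sub_le hc h (singleton_subset_iff.2 (by simpa using h))
    (sum_eDist_singleton_balanced hc x y)
  rw [card_singleton, Nat.cast_one] at habs
  have hsq := sq_le_sq' (abs_le.1 habs).1 (abs_le.1 habs).2
  rw [excess_mk]
  linarith

lemma isLeafAt_of_excess_eq_zero (hc : G.Connected) (h : G.Adj x y)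
    (h0 : excess G s(x, y) = 0) : IsLeafAt G y x ∨ IsLeafAt G x y := by
  have hsq : (edgeTransmission G x - edgeTransmission G y) ^ 2 =
      (#G.edgeFinset - #({s(x, y)} : Finset (Sym2 V)) : ℚ) ^ 2 := by
    rw [excess_mk] at h0
    rw [card_singleton, Nat.cast_one]
    linarith
  refine (mk_mem_or_mk_mem_of_sq_eq hc h (singleton_subset_iff.2 (by simpa using h))
    (sum_eDist_singleton_balanced hc x y) hsq).imp (fun hB => ⟨h.symm, fun w hw => ?_⟩)
    fun hB => ⟨h, fun w hw => ?_⟩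
  · simpa [h.ne] using hB w hw
  · simpa [h.ne'] using hB w hw

lemma threePath_subset_edgeFinset (h : G.Adj x y) (ha : G.Adj x a) (hb : G.Adj y b) :
    {s(x, y), s(x, a), s(y, b)} ⊆ G.edgeFinset := by
  simp [insert_subset_iff, h, ha, hb]

lemma card_sub_two_le_excess (hc : G.Connected) (h : G.Adj x y) (ha : G.Adj x a)
    (hb : G.Adj y b) (hay : a ≠ y) (hbx : b ≠ x) :
    (#G.edgeFinset : ℚ) - 2 ≤ excess G s(x, y) := by
  have habs := abs_edgeTransmission_sub_le hc h (threePath_subset_edgeFinset h ha hb)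
    (sum_eDist_threePath_balanced hc h hay hbx)
  rw [card_threePath h hay hbx] at habs
  have hsq := sq_le_sq' (abs_le.1 habs).1 (abs_le.1 habs).2
  rw [excess_mk]
  push_cast at hsq
  linarith

lemma eq_or_eq_of_excess_eq_card_sub_two (hc : G.Connected) (h : G.Adj x y) (ha : G.Adj x a)
    (hb : G.Adj y b) (hay : a ≠ y) (hbx : b ≠ x) (heq : excess G s(x, y) = #G.edgeFinset - 2) :
    (∀ w, G.Adj x w → w = y ∨ w = a) ∨ (∀ w, G.Adj y w → w = x ∨ w = b) := by
  have hsq : (edgeTransmission G x - edgeTransmission G y) ^ 2 =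
      (#G.edgeFinset - #({s(x, y), s(x, a), s(y, b)} : Finset (Sym2 V)) : ℚ) ^ 2 := by
    rw [excess_mk] at heq
    rw [card_threePath h hay hbx]
    push_cast
    linarith
  refine (mk_mem_or_mk_mem_of_sq_eq hc h (threePath_subset_edgeFinset h ha hb)
    (sum_eDist_threePath_balanced hc h hay hbx) hsq).imp (fun hB w hw => ?_) fun hB w hw => ?_
  · simpa [h.ne, ha.ne, hbx.symm] using hB w hw
  · simpa [h.ne', hb.ne, hay.symm] using hB w hw

end EdgeExcess

section CycleEdgeSets

variable {V : Type*} {G : SimpleGraph V} {C D : Finset (Sym2 V)}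

/-- `C` is the set of edges of a cycle of `G`. A cactus has its cycles counted as such sets, since
one cycle is traversed by many closed walks. -/
def IsCycleEdgeSet (G : SimpleGraph V) (C : Finset (Sym2 V)) : Prop :=
  ∃ (a : V) (p : G.Walk a a), p.IsCycle ∧ p.edges.toFinset = C

lemma IsCycleEdgeSet.mem_edgeSet (hC : IsCycleEdgeSet G C) {e : Sym2 V} (he : e ∈ C) :
    e ∈ G.edgeSet := by
  obtain ⟨a, p, -, rfl⟩ := hC
  exact p.edges_subset_edgeSet (List.mem_toFinset.1 he)

lemma IsCycleEdgeSet.nonempty (hC : IsCycleEdgeSet G C) : C.Nonempty := by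
  obtain ⟨a, p, hp, rfl⟩ := hC
  rw [List.toFinset_nonempty_iff, ← List.length_pos_iff, p.length_edges]
  exact (Nat.zero_lt_succ 2).trans_le hp.three_le_length

lemma IsCycleEdgeSet.mono {H : SimpleGraph V} (hle : H ≤ G) (hC : IsCycleEdgeSet H C) :
    IsCycleEdgeSet G C := by
  obtain ⟨a, p, hp, rfl⟩ := hC
  exact ⟨a, p.mapLe hle, hp.mapLe hle, by rw [SimpleGraph.Walk.edges_mapLe_eq_edges]⟩

lemma isBridge_iff_notMem_cycleEdgeSet {e : Sym2 V} (he : e ∈ G.edgeSet) :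
    G.IsBridge e ↔ ∀ C, IsCycleEdgeSet G C → e ∉ C := by
  rw [SimpleGraph.isBridge_iff_forall_cycle_notMem he]
  constructor
  · rintro h C ⟨a, p, hp, rfl⟩
    simpa using h p hp
  · exact fun h a p hp => by simpa using h _ ⟨a, p, hp, rfl⟩

lemma isAcyclic_deleteEdges_of_hits_cycles {T : Set (Sym2 V)}
    (hT : ∀ C, IsCycleEdgeSet G C → ∃ e ∈ C, e ∈ T) : (G.deleteEdges T).IsAcyclic := by
  intro a p hp
  have hC : IsCycleEdgeSet (G.deleteEdges T) p.edges.toFinset := ⟨a, p, hp, rfl⟩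
  obtain ⟨e, he, heT⟩ := hT _ (hC.mono (G.deleteEdges_le T))
  have hmem := hC.mem_edgeSet he
  rw [SimpleGraph.edgeSet_deleteEdges] at hmem
  exact hmem.2 heT

lemma IsCactus.cycleEdgeSet_eq (hG : IsCactus G) (hC : IsCycleEdgeSet G C)
    (hD : IsCycleEdgeSet G D) {e : Sym2 V} (heC : e ∈ C) (heD : e ∈ D) : C = D := by
  obtain ⟨a, p, hp, rfl⟩ := hC
  obtain ⟨b, q, hq, rfl⟩ := hD
  by_contra hne
  induction e with
  | _ u v =>
    rw [List.mem_toFinset] at heC heD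
    have huv : u = v := card_le_one.1 (hG.2 p q hp hq hne)
      u (by simp [p.fst_mem_support_of_mem_edges heC, q.fst_mem_support_of_mem_edges heD])
      v (by simp [p.snd_mem_support_of_mem_edges heC, q.snd_mem_support_of_mem_edges heD])
    exact (p.adj_of_mem_edges heC).ne huv

variable [Fintype V]

/-- The cycles of `G`, each represented by its set of edges. -/
noncomputable def cycleEdgeSets (G : SimpleGraph V) : Finset (Finset (Sym2 V)) :=
  univ.filter (IsCycleEdgeSet G)

@[simp]
lemma mem_cycleEdgeSets : C ∈ cycleEdgeSets G ↔ IsCycleEdgeSet G C := by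
  simp [cycleEdgeSets]

lemma IsCycleEdgeSet.subset_edgeFinset (hC : IsCycleEdgeSet G C) : C ⊆ G.edgeFinset := fun _ he =>
  SimpleGraph.mem_edgeFinset.2 (hC.mem_edgeSet he)

lemma IsCactus.pairwiseDisjoint_cycleEdgeSets (hG : IsCactus G) :
    Set.PairwiseDisjoint (cycleEdgeSets G : Set (Finset (Sym2 V))) id := by
  intro C hC D hD hne
  exact disjoint_left.2 fun e heC heD =>
    hne (hG.cycleEdgeSet_eq (mem_cycleEdgeSets.1 hC) (mem_cycleEdgeSets.1 hD) heC heD)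

lemma card_edgeFinset_add_one_le (hc : G.Connected) :
    #G.edgeFinset + 1 ≤ Fintype.card V + #(cycleEdgeSets G) := by
  have hnonempty (C : cycleEdgeSets G) : C.1.Nonempty := (mem_cycleEdgeSets.1 C.2).nonempty
  choose e he using hnonempty
  let T : Finset (Sym2 V) := univ.image e
  have hacyclic : (G.deleteEdges (T : Set (Sym2 V))).IsAcyclic :=
    isAcyclic_deleteEdges_of_hits_cycles fun C hC =>
      ⟨e ⟨C, mem_cycleEdgeSets.2 hC⟩, he _, mem_coe.2 (mem_image_of_mem _ (mem_univ _))⟩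
  obtain ⟨F, hF, -, hFtree⟩ :=
    hc.exists_isTree_le_of_le_of_isAcyclic (G.deleteEdges_le _) hacyclic
  have hcover : G.edgeFinset ⊆ F.edgeFinset ∪ T := by
    intro f hf
    by_cases hfT : f ∈ T
    · exact mem_union_right _ hfT
    · refine mem_union_left _ (SimpleGraph.mem_edgeFinset.2 (SimpleGraph.edgeSet_mono hF ?_))
      rw [SimpleGraph.edgeSet_deleteEdges]
      exact ⟨SimpleGraph.mem_edgeFinset.1 hf, hfT⟩
  have hT : #T ≤ #(cycleEdgeSets G) := card_image_le.trans_eq (by simp)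
  have hle := (card_le_card hcover).trans (card_union_le _ _)
  have htree := hFtree.card_edgeFinset
  omega

end CycleEdgeSets

section ZMod

variable {r : ℕ}

lemma natCast_zmod_ne_zero {t : ℕ} (h0 : t ≠ 0) (ht : t < r) : (t : ZMod r) ≠ 0 := by
  rw [Ne, ZMod.natCast_eq_zero_iff]
  exact Nat.not_dvd_of_pos_of_lt (Nat.pos_of_ne_zero h0) ht

lemma exists_eq_add_one_add_natCast_of_ne [NeZero r] {i j : ZMod r} (hij : i ≠ j) :
    ∃ t : ℕ, t + 1 < r ∧ j = i + 1 + t := by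
  refine ⟨(j - i).val - 1, ?_, ?_⟩
  · have := ZMod.val_lt (j - i)
    have := (ZMod.val_ne_zero (j - i)).2 (sub_ne_zero.2 hij.symm)
    omega
  · have hpos : 1 ≤ (j - i).val :=
      Nat.one_le_iff_ne_zero.2 ((ZMod.val_ne_zero _).2 (sub_ne_zero.2 hij.symm))
    rw [Nat.cast_sub hpos, ZMod.natCast_zmod_val, Nat.cast_one]
    ring

end ZMod

section CycleParametrization

variable {V : Type*} {G : SimpleGraph V} {C : Finset (Sym2 V)} {r : ℕ} {c : ZMod r → V}

/-- `c` runs once around a cycle of `G` of length `r` with edge set `C`. -/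
structure IsCycleParam (G : SimpleGraph V) (C : Finset (Sym2 V)) {r : ℕ} (c : ZMod r → V) :
    Prop where
  three_le : 3 ≤ r
  injective : Function.Injective c
  adj : ∀ i, G.Adj (c i) (c (i + 1))
  mem_iff : ∀ e, e ∈ C ↔ ∃ i, e = s(c i, c (i + 1))

namespace IsCycleParam

lemma neZero (h : IsCycleParam G C c) : NeZero r := ⟨by have := h.three_le; omega⟩

lemma add_one_ne (h : IsCycleParam G C c) (i : ZMod r) : i + 1 ≠ i := by
  have hne := natCast_zmod_ne_zero one_ne_zero (h.three_le.trans_lt' (by norm_num))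
  rw [Nat.cast_one] at hne
  simpa using hne

lemma add_one_ne_sub_one (h : IsCycleParam G C c) (i : ZMod r) : i + 1 ≠ i - 1 := by
  have hne := natCast_zmod_ne_zero two_ne_zero h.three_le
  rintro heq
  exact hne (by push_cast; linear_combination heq)

lemma edge_mem (h : IsCycleParam G C c) (i : ZMod r) : s(c i, c (i + 1)) ∈ C :=
  (h.mem_iff _).2 ⟨i, rfl⟩

lemma edge_injective (h : IsCycleParam G C c) :
    Function.Injective fun i => s(c i, c (i + 1)) := by
  intro i j hij
  rcases Sym2.eq_iff.1 hij with ⟨hi, -⟩ | ⟨hi, hi'⟩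
  · exact h.injective hi
  · rw [h.injective hi] at hi'
    exact absurd (by linear_combination h.injective hi') (h.add_one_ne_sub_one j)

lemma mk_mem_iff (h : IsCycleParam G C c) (i : ZMod r) (w : V) :
    s(c i, w) ∈ C ↔ w = c (i + 1) ∨ w = c (i - 1) := by
  constructor
  · intro hw
    obtain ⟨j, hj⟩ := (h.mem_iff _).1 hw
    rcases Sym2.eq_iff.1 hj with ⟨hi, rfl⟩ | ⟨hi, rfl⟩
    · exact .inl (by rw [h.injective hi])
    · exact .inr (by rw [h.injective hi, add_sub_cancel_right])
  · rintro (rfl | rfl)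
    · exact h.edge_mem i
    · simpa [Sym2.eq_swap] using h.edge_mem (i - 1)

lemma comp_add_left (h : IsCycleParam G C c) (a : ZMod r) :
    IsCycleParam G C fun i => c (a + i) where
  three_le := h.three_le
  injective := h.injective.comp (add_right_injective a)
  adj i := add_assoc a i 1 ▸ h.adj (a + i)
  mem_iff e := by
    rw [h.mem_iff, ← (Equiv.addLeft a).exists_congr_right]
    simp only [Equiv.coe_addLeft, add_assoc]

lemma reachable_of_ne (h : IsCycleParam G C c) {i j : ZMod r} (hij : i ≠ j) :
    (G.deleteEdges {s(c (i - 1), c (i - 1 + 1)), s(c i, c (i + 1))}).Reachable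
      (c (i + 1)) (c j) := by
  have := h.neZero
  have harc (t : ℕ) (ht : t + 1 < r) :
      (G.deleteEdges {s(c (i - 1), c (i - 1 + 1)), s(c i, c (i + 1))}).Reachable
        (c (i + 1)) (c (i + 1 + t)) := by
    induction t with
    | zero => simp
    | succ t ih =>
      refine (ih (by omega)).trans (SimpleGraph.Adj.reachable ?_)
      rw [Nat.cast_succ, ← add_assoc, SimpleGraph.deleteEdges_adj]
      refine ⟨h.adj _, ?_⟩
      rintro (heq | heq)
      · refine natCast_zmod_ne_zero (Nat.succ_ne_zero (t + 1)) ht ?_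
        push_cast
        linear_combination h.edge_injective heq
      · refine natCast_zmod_ne_zero (Nat.succ_ne_zero t) ((Nat.lt_succ_self _).trans ht) ?_
        push_cast
        linear_combination h.edge_injective heq
  obtain ⟨t, ht, rfl⟩ := exists_eq_add_one_add_natCast_of_ne hij
  exact harc t ht

lemma subset_edgeFinset [Fintype V] (h : IsCycleParam G C c) : C ⊆ G.edgeFinset := by
  intro e he
  obtain ⟨i, rfl⟩ := (h.mem_iff e).1 he
  simpa using h.adj i

variable [NeZero r]

lemma eq_image (h : IsCycleParam G C c) : C = univ.image fun i => s(c i, c (i + 1)) := by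
  ext e
  simp [h.mem_iff, eq_comm]

lemma sum_eq {M : Type*} [AddCommMonoid M] (h : IsCycleParam G C c) (g : Sym2 V → M) :
    ∑ e ∈ C, g e = ∑ i, g s(c i, c (i + 1)) := by
  rw [h.eq_image, sum_image h.edge_injective.injOn]

lemma card_eq (h : IsCycleParam G C c) : #C = r := by
  rw [h.eq_image, card_image_of_injective _ h.edge_injective, card_univ, ZMod.card]

end IsCycleParam

lemma IsCycleEdgeSet.exists_isCycleParam (hC : IsCycleEdgeSet G C) :
    ∃ (r : ℕ) (c : ZMod r → V), IsCycleParam G C c := by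
  obtain ⟨a, p, hp, rfl⟩ := hC
  have hlen := hp.three_le_length
  have : NeZero p.length := ⟨by omega⟩
  have : Fact (1 < p.length) := ⟨by omega⟩
  have hsucc (i : ZMod p.length) : p.getVert (i + 1).val = p.getVert (i.val + 1) := by
    rw [ZMod.val_add, ZMod.val_one]
    rcases (Nat.succ_le_of_lt (ZMod.val_lt i)).lt_or_eq with hi | hi
    · rw [Nat.mod_eq_of_lt hi]
    · rw [← Nat.succ_eq_add_one, hi, Nat.mod_self, p.getVert_zero, p.getVert_length]
  refine ⟨p.length, fun i => p.getVert i.val, hlen, fun i j hij => ?_, fun i => ?_, fun e => ?_⟩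
  · exact ZMod.val_injective _ (hp.getVert_injOn' (Nat.le_sub_one_of_lt (ZMod.val_lt i))
      (Nat.le_sub_one_of_lt (ZMod.val_lt j)) hij)
  · simpa only [hsucc] using p.adj_getVert_succ (ZMod.val_lt i)
  · induction e with
    | _ u v =>
      simp only [List.mem_toFinset, SimpleGraph.Walk.mk_mem_edges_iff_exists, hsucc]
      constructor
      · rintro ⟨i, hi, h⟩
        exact ⟨(i : ZMod p.length), by rw [ZMod.val_natCast, Nat.mod_eq_of_lt hi, h]⟩
      · rintro ⟨i, h⟩
        exact ⟨i.val, ZMod.val_lt i, h.symm⟩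

end CycleParametrization

section BlockCycle

variable {V : Type*} {G : SimpleGraph V} {C : Finset (Sym2 V)} {r : ℕ} {c : ZMod r → V}

/-- `c` parametrizes a cycle with edge set `C` that is a block of `G`: without the edges of the
cycle, its vertices lie in distinct components. -/
structure IsBlockCycle (G : SimpleGraph V) (C : Finset (Sym2 V)) {r : ℕ} (c : ZMod r → V) : Prop
    extends IsCycleParam G C c where
  eq_of_reachable : ∀ i j, (G.deleteEdges (C : Set (Sym2 V))).Reachable (c i) (c j) → i = j

lemma IsBlockCycle.comp_add_left (h : IsBlockCycle G C c) (a : ZMod r) :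
    IsBlockCycle G C fun i => c (a + i) where
  toIsCycleParam := h.toIsCycleParam.comp_add_left a
  eq_of_reachable _ _ hij := add_left_cancel (h.eq_of_reachable _ _ hij)

lemma IsCactus.isBlockCycle (hG : IsCactus G) (hC : IsCycleEdgeSet G C)
    (h : IsCycleParam G C c) : IsBlockCycle G C c where
  toIsCycleParam := h
  eq_of_reachable i j hij := by
    by_contra hne
    let e := s(c i, c (i + 1))
    let e' := s(c (i - 1), c (i - 1 + 1))
    have hee' : e ≠ e' := fun heq =>
      h.add_one_ne (i - 1) ((sub_add_cancel i 1).trans (h.edge_injective heq))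
    have hbridge : (G.deleteEdges {e'}).IsBridge e := by
      rw [isBridge_iff_notMem_cycleEdgeSet]
      · intro D hD heD
        obtain rfl := hG.cycleEdgeSet_eq hC (hD.mono (G.deleteEdges_le _)) (h.edge_mem i) heD
        have he' := hD.mem_edgeSet (h.edge_mem (i - 1))
        rw [SimpleGraph.edgeSet_deleteEdges] at he'
        exact he'.2 rfl
      · rw [SimpleGraph.edgeSet_deleteEdges]
        exact ⟨h.adj i, hee'⟩
    rw [SimpleGraph.isBridge_iff, SimpleGraph.deleteEdges_deleteEdges] at hbridge
    refine hbridge ((hij.mono (SimpleGraph.deleteEdges_anti ?_)).trans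
      (h.reachable_of_ne hne).symm)
    rintro _ (rfl | rfl)
    exacts [h.edge_mem _, h.edge_mem _]

lemma IsCactus.exists_isBlockCycle (hG : IsCactus G) (hC : IsCycleEdgeSet G C) :
    ∃ (r : ℕ) (c : ZMod r → V), IsBlockCycle G C c :=
  let ⟨r, c, h⟩ := hC.exists_isCycleParam
  ⟨r, c, hG.isBlockCycle hC h⟩

end BlockCycle

section WeakHom

variable {V W : Type*} {G : SimpleGraph V} {H : SimpleGraph W} {f : V → W}

lemma exists_walk_length_le_of_eq_or_adj
    (hf : ∀ u v, G.Adj u v → f u = f v ∨ H.Adj (f u) (f v)) {a b : V} (p : G.Walk a b) :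
    ∃ q : H.Walk (f a) (f b), q.length ≤ p.length := by
  induction p with
  | nil => exact ⟨.nil, le_rfl⟩
  | cons h p ih =>
    obtain ⟨q, hq⟩ := ih
    rcases hf _ _ h with heq | hadj
    · exact ⟨q.copy heq.symm rfl, by simpa using hq.trans (Nat.le_succ _)⟩
    · exact ⟨.cons hadj q, Nat.succ_le_succ hq⟩

lemma dist_map_le_of_eq_or_adj (hc : G.Connected)
    (hf : ∀ u v, G.Adj u v → f u = f v ∨ H.Adj (f u) (f v)) (a b : V) :
    H.dist (f a) (f b) ≤ G.dist a b := by
  obtain ⟨p, hp⟩ := hc.exists_walk_length_eq_dist a b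
  obtain ⟨q, hq⟩ := exists_walk_length_le_of_eq_or_adj hf p
  exact (SimpleGraph.dist_le q).trans (hq.trans_eq hp)

end WeakHom

section BlockCycle

variable {V : Type*} {G : SimpleGraph V} {C : Finset (Sym2 V)} {r : ℕ} {c : ZMod r → V}

lemma IsCycleParam.exists_reachable_deleteEdges (hc : G.Connected) (h : IsCycleParam G C c)
    (w : V) : ∃ i, (G.deleteEdges (C : Set (Sym2 V))).Reachable (c i) w := by
  obtain ⟨p⟩ := hc.preconnected w (c 0)
  generalize hz : c 0 = z at p
  induction p with
  | nil => exact ⟨0, by rw [hz]⟩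
  | @cons u v _ hadj _ ih =>
    by_cases hmem : s(u, v) ∈ C
    · obtain ⟨j, hj⟩ := (h.mem_iff _).1 hmem
      rcases Sym2.eq_iff.1 hj with ⟨rfl, -⟩ | ⟨rfl, -⟩
      exacts [⟨j, .refl _⟩, ⟨j + 1, .refl _⟩]
    · obtain ⟨i, hi⟩ := ih hz
      refine ⟨i, hi.trans (SimpleGraph.Adj.reachable ?_)⟩
      rw [SimpleGraph.deleteEdges_adj]
      exact ⟨hadj.symm, by rwa [Sym2.eq_swap]⟩

namespace IsBlockCycle

lemma exists_gate (hc : G.Connected) (h : IsBlockCycle G C c) : ∃ gate : V → ZMod r,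
    (∀ i, gate (c i) = i) ∧ ∀ u v, G.Adj u v → s(u, v) ∉ C → gate u = gate v := by
  choose gate hgate using h.exists_reachable_deleteEdges hc
  refine ⟨gate, fun i => h.eq_of_reachable _ _ (hgate (c i)), fun u v huv hC => ?_⟩
  have hadj : (G.deleteEdges (C : Set (Sym2 V))).Adj u v := by
    rw [SimpleGraph.deleteEdges_adj]
    exact ⟨huv, hC⟩
  exact h.eq_of_reachable _ _ (((hgate u).trans hadj.reachable).trans (hgate v).symm)

-- Collapsing every vertex to its gate on the cycle and then rotating the cycle maps edges to
-- edges or to single vertices, so it does not increase distances.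
lemma dist_add_right_le (hc : G.Connected) (h : IsBlockCycle G C c) (d i j : ZMod r) :
    G.dist (c (i + d)) (c (j + d)) ≤ G.dist (c i) (c j) := by
  obtain ⟨gate, hgate, hgate_adj⟩ := h.exists_gate hc
  have hweak (u v : V) (huv : G.Adj u v) :
      c (gate u + d) = c (gate v + d) ∨ G.Adj (c (gate u + d)) (c (gate v + d)) := by
    by_cases hmem : s(u, v) ∈ C
    · obtain ⟨k, hk⟩ := (h.mem_iff _).1 hmem
      have hadj : G.Adj (c (k + d)) (c (k + 1 + d)) := add_right_comm k d 1 ▸ h.adj (k + d)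
      rcases Sym2.eq_iff.1 hk with ⟨rfl, rfl⟩ | ⟨rfl, rfl⟩
      · exact .inr (by rwa [hgate, hgate])
      · exact .inr (by rw [hgate, hgate]; exact hadj.symm)
    · exact .inl (by rw [hgate_adj u v huv hmem])
  simpa only [hgate] using dist_map_le_of_eq_or_adj hc hweak (c i) (c j)

lemma dist_add_right (hc : G.Connected) (h : IsBlockCycle G C c) (d i j : ZMod r) :
    G.dist (c (i + d)) (c (j + d)) = G.dist (c i) (c j) := by
  refine (h.dist_add_right_le hc d i j).antisymm ?_
  simpa only [add_neg_cancel_right] using h.dist_add_right_le hc (-d) (i + d) (j + d)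

lemma sum_eDist_eq [NeZero r] (hc : G.Connected) (h : IsBlockCycle G C c) (i j : ZMod r) :
    ∑ f ∈ C, (eDist G f (c i) : ℚ) = ∑ f ∈ C, (eDist G f (c j) : ℚ) := by
  rw [h.sum_eq, h.sum_eq]
  refine Fintype.sum_equiv (Equiv.addRight (j - i)) _ _ fun k => ?_
  have hk := h.dist_add_right hc (j - i) k i
  have hk' := h.dist_add_right hc (j - i) (k + 1) i
  rw [add_sub_cancel] at hk hk'
  rw [eDist_mk, eDist_mk, Equiv.coe_addRight, hk, add_right_comm k (j - i) 1, hk']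

variable [Fintype V] [NeZero r]

lemma abs_edgeTransmission_sub_le (hc : G.Connected) (h : IsBlockCycle G C c) (i : ZMod r) :
    |edgeTransmission G (c i) - edgeTransmission G (c (i + 1))| ≤ #G.edgeFinset - r := by
  simpa only [h.card_eq] using
    _root_.abs_edgeTransmission_sub_le hc (h.adj i) h.subset_edgeFinset (h.sum_eDist_eq hc _ _)

end IsBlockCycle

end BlockCycle

section CycleExcess

lemma sq_add_sq_add_sq_le_of_add_eq_zero {a b c M : ℚ} (ha : |a| ≤ M) (hb : |b| ≤ M)
    (hc : |c| ≤ M) (h : a + b + c = 0) : a ^ 2 + b ^ 2 + c ^ 2 ≤ 2 * M ^ 2 := by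
  obtain rfl : c = -a - b := by linarith
  rw [abs_le] at ha hb hc
  rcases le_total 0 a with h1 | h1 <;> rcases le_total 0 b with h2 | h2 <;>
    rcases le_total 0 (a + b) with h3 | h3 <;> nlinarith

lemma quadrangle_excess_lt {m r : ℚ} (h4 : 4 < r) (hrm : r ≤ m) :
    6 * m - 15 < r * (r - 1) * (2 * m - r - 1) / 4 := by
  have hpos : 0 < (r + 3) * (2 * m - 1 - r) - 12 := by nlinarith
  have := mul_pos (sub_pos.2 h4) hpos
  linarith

namespace IsBlockCycle

variable {V : Type*} [Fintype V] {G : SimpleGraph V} {C : Finset (Sym2 V)}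

section

variable {r : ℕ} [NeZero r] {c : ZMod r → V}

lemma edgeTransmission_sub_sq_le (hc : G.Connected) (h : IsBlockCycle G C c) (i : ZMod r) :
    (edgeTransmission G (c i) - edgeTransmission G (c (i + 1))) ^ 2 ≤
      (#G.edgeFinset - r : ℚ) ^ 2 :=
  have habs := abs_le.1 (h.abs_edgeTransmission_sub_le hc i)
  sq_le_sq' habs.1 habs.2

lemma sum_excess_eq (h : IsBlockCycle G C c) :
    ∑ e ∈ C, excess G e = (r * (#G.edgeFinset - 1 : ℚ) ^ 2 -
      ∑ i, (edgeTransmission G (c i) - edgeTransmission G (c (i + 1))) ^ 2) / 4 := by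
  simp only [h.sum_eq, excess_mk, ← sum_div, sum_sub_distrib, sum_const, card_univ, ZMod.card,
    nsmul_eq_mul]

lemma le_sum_excess (hc : G.Connected) (h : IsBlockCycle G C c) :
    (r * (r - 1) * (2 * #G.edgeFinset - r - 1) / 4 : ℚ) ≤ ∑ e ∈ C, excess G e := by
  have hle := sum_le_card_nsmul univ _ _ fun i _ => h.edgeTransmission_sub_sq_le hc i
  rw [card_univ, ZMod.card, nsmul_eq_mul] at hle
  rw [h.sum_excess_eq]
  linarith

lemma edgeTransmission_sub_sq_eq (hc : G.Connected) (h : IsBlockCycle G C c)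
    (heq : ∑ e ∈ C, excess G e = (r * (r - 1) * (2 * #G.edgeFinset - r - 1) / 4 : ℚ))
    (i : ZMod r) : (edgeTransmission G (c i) - edgeTransmission G (c (i + 1))) ^ 2 =
      (#G.edgeFinset - r : ℚ) ^ 2 := by
  refine (sum_eq_sum_iff_of_le fun i _ => h.edgeTransmission_sub_sq_le hc i).1 ?_ i (mem_univ i)
  rw [h.sum_excess_eq] at heq
  rw [sum_const, card_univ, ZMod.card, nsmul_eq_mul]
  linarith

lemma le_card_edgeFinset (h : IsBlockCycle G C c) : r ≤ #G.edgeFinset :=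
  h.card_eq ▸ card_le_card h.subset_edgeFinset

end

-- The three differences around a triangle sum to `0`, so they cannot all be as large as
-- `edgeTransmission_sub_sq_le` allows; this loss makes triangles suboptimal.
lemma quadrangle_excess_lt_of_triangle {c : ZMod 3 → V} (hc : G.Connected)
    (h : IsBlockCycle G C c) (hm : 15 < #G.edgeFinset) :
    (6 * #G.edgeFinset - 15 : ℚ) < ∑ e ∈ C, excess G e := by
  have hle := sq_add_sq_add_sq_le_of_add_eq_zero (h.abs_edgeTransmission_sub_le hc 0)
    (h.abs_edgeTransmission_sub_le hc 1) (h.abs_edgeTransmission_sub_le hc 2)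
    (by rw [show (0 : ZMod 3) + 1 = 1 from rfl, show (1 : ZMod 3) + 1 = 2 from rfl,
      show (2 : ZMod 3) + 1 = 0 from rfl]; ring)
  have hsum : ∑ i : ZMod 3, (edgeTransmission G (c i) - edgeTransmission G (c (i + 1))) ^ 2 ≤
      2 * (#G.edgeFinset - 3 : ℚ) ^ 2 := (Fin.sum_univ_three _).trans_le hle
  have hm' : (15 : ℚ) < #G.edgeFinset := by exact_mod_cast hm
  rw [h.sum_excess_eq]
  push_cast
  nlinarith

lemma quadrangle_excess_lt_of_ne_four {r : ℕ} {c : ZMod r → V} (hc : G.Connected)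
    (h : IsBlockCycle G C c) (hm : 15 < #G.edgeFinset) (hr : r ≠ 4) :
    (6 * #G.edgeFinset - 15 : ℚ) < ∑ e ∈ C, excess G e := by
  have := h.neZero
  rcases h.three_le.eq_or_lt with rfl | h3
  · exact h.quadrangle_excess_lt_of_triangle hc hm
  · exact (quadrangle_excess_lt (by exact_mod_cast lt_of_le_of_ne h3 hr.symm)
      (by exact_mod_cast h.le_card_edgeFinset)).trans_le (h.le_sum_excess hc)

lemma quadrangle_excess_le {r : ℕ} {c : ZMod r → V} (hc : G.Connected)
    (h : IsBlockCycle G C c) (hm : 15 < #G.edgeFinset) :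
    (6 * #G.edgeFinset - 15 : ℚ) ≤ ∑ e ∈ C, excess G e := by
  by_cases hr : r = 4
  · subst hr
    convert h.le_sum_excess hc using 1
    push_cast
    ring
  · exact (h.quadrangle_excess_lt_of_ne_four hc hm hr).le

end IsBlockCycle

end CycleExcess

section TightCycle

variable {V : Type*} {G : SimpleGraph V} {C : Finset (Sym2 V)}

namespace IsBlockCycle

section

variable [Fintype V] {r : ℕ} [NeZero r] {c : ZMod r → V}

lemma eDist_add_one_eq (hc : G.Connected) (h : IsBlockCycle G C c) {i : ZMod r}
    (hsq : (edgeTransmission G (c i) - edgeTransmission G (c (i + 1))) ^ 2 =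
      (#G.edgeFinset - r : ℚ) ^ 2)
    {w : V} (hw : G.Adj (c i) w) (hwC : s(c i, w) ∉ C) {f : Sym2 V} (hf : f ∈ G.edgeFinset)
    (hfC : f ∉ C) : eDist G f (c (i + 1)) = eDist G f (c i) + 1 := by
  rcases eDist_eq_add_one_or_of_sq_eq hc (h.adj i) h.subset_edgeFinset (h.sum_eDist_eq hc _ _)
    (by rw [h.card_eq]; exact hsq) with hdown | hup
  · have hzero := (eDist_eq_zero_iff hc).2 (Sym2.mem_mk_left (c i) w)
    have := hdown s(c i, w) (by simpa using hw) hwC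
    omega
  · exact hup f hf hfC

lemma eDist_eq_add_one (hc : G.Connected) (h : IsBlockCycle G C c) {i : ZMod r}
    (hsq : (edgeTransmission G (c i) - edgeTransmission G (c (i + 1))) ^ 2 =
      (#G.edgeFinset - r : ℚ) ^ 2)
    {w : V} (hw : G.Adj (c (i + 1)) w) (hwC : s(c (i + 1), w) ∉ C) {f : Sym2 V}
    (hf : f ∈ G.edgeFinset) (hfC : f ∉ C) : eDist G f (c i) = eDist G f (c (i + 1)) + 1 := by
  rcases eDist_eq_add_one_or_of_sq_eq hc (h.adj i) h.subset_edgeFinset (h.sum_eDist_eq hc _ _)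
    (by rw [h.card_eq]; exact hsq) with hdown | hup
  · exact hdown f hf hfC
  · have hzero := (eDist_eq_zero_iff hc).2 (Sym2.mem_mk_left (c (i + 1)) w)
    have := hup s(c (i + 1), w) (by simpa using hw) hwC
    omega

end

end IsBlockCycle

/-- `c` parametrizes a quadrangle with edge set `C` that starts at `x` and is attached to the rest
of `G` only there. -/
structure IsQuadrangleAt (G : SimpleGraph V) (x : V) (C : Finset (Sym2 V)) (c : ZMod 4 → V) : Prop
    extends IsBlockCycle G C c where
  zero_eq : c 0 = x
  mem_of_adj : ∀ i, i ≠ 0 → ∀ w, G.Adj (c i) w → s(c i, w) ∈ C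

lemma IsBlockCycle.isQuadrangleAt [Fintype V] {c : ZMod 4 → V} {x y : V} (hc : G.Connected)
    (h : IsBlockCycle G C c)
    (hsq : ∀ i, (edgeTransmission G (c i) - edgeTransmission G (c (i + 1))) ^ 2 =
      (#G.edgeFinset - 4 : ℚ) ^ 2)
    (hx : c 0 = x) (hy : G.Adj x y) (hyC : s(x, y) ∉ C) : IsQuadrangleAt G x C c where
  toIsBlockCycle := h
  zero_eq := hx
  mem_of_adj i hi w hw := by
    subst hx
    by_contra hwC
    have hf : s(c i, w) ∈ G.edgeFinset := by simpa using hw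
    have hzero : eDist G s(c i, w) (c i) = 0 := (eDist_eq_zero_iff hc).2 (Sym2.mem_mk_left _ _)
    have hup : eDist G s(c i, w) (c 1) = eDist G s(c i, w) (c 0) + 1 :=
      h.eDist_add_one_eq hc (i := 0) (by exact_mod_cast hsq 0) hy hyC hf hwC
    have hcases : ∀ i : ZMod 4, i ≠ 0 → i = 1 ∨ i = 2 ∨ i = 3 := by decide
    obtain rfl | rfl | rfl := hcases i hi
    · omega
    · have hdown : eDist G s(c 2, w) (c 1) = eDist G s(c 2, w) (c 2) + 1 :=
        h.eDist_eq_add_one hc (i := 1) (by exact_mod_cast hsq 1) hw hwC hf hwC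
      have hmem : c 0 ∈ s(c 2, w) := (eDist_eq_zero_iff hc).1 (by omega)
      rcases Sym2.mem_iff.1 hmem with heq | rfl
      · exact absurd (h.injective heq) (by decide)
      · have hadj : (G.deleteEdges (C : Set (Sym2 V))).Adj (c 2) (c 0) := by
          rw [SimpleGraph.deleteEdges_adj]
          exact ⟨hw, hwC⟩
        exact absurd (h.eq_of_reachable _ _ hadj.reachable) (by decide)
    · have hdown : eDist G s(c 3, w) (c 3) = eDist G s(c 3, w) (c 0) + 1 :=
        h.eDist_eq_add_one hc (i := 3) (by exact_mod_cast hsq 3) hy hyC hf hwC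
      omega

lemma IsCactus.exists_isQuadrangleAt [Fintype V] (hG : IsCactus G) (hC : IsCycleEdgeSet G C)
    (hm : 15 < #G.edgeFinset) (htight : ∑ e ∈ C, excess G e = (6 * #G.edgeFinset - 15 : ℚ))
    {x y z : V} (hxz : s(x, z) ∈ C) (hxy : G.Adj x y) (hxyC : s(x, y) ∉ C) :
    ∃ c, IsQuadrangleAt G x C c := by
  obtain ⟨r, c, h⟩ := hG.exists_isBlockCycle hC
  obtain rfl : r = 4 := by
    by_contra hr
    exact (h.quadrangle_excess_lt_of_ne_four hG.1 hm hr).ne' htight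
  obtain ⟨i, rfl⟩ : ∃ i, c i = x := by
    obtain ⟨i, hi⟩ := (h.mem_iff _).1 hxz
    rcases Sym2.eq_iff.1 hi with ⟨rfl, -⟩ | ⟨rfl, -⟩
    exacts [⟨i, rfl⟩, ⟨i + 1, rfl⟩]
  have h' := h.comp_add_left i
  have hsq := h'.edgeTransmission_sub_sq_eq hG.1 (htight.trans (by push_cast; ring))
  exact ⟨_, h'.isQuadrangleAt hG.1 (by exact_mod_cast hsq) (congrArg c (add_zero i)) hxy hxyC⟩

end TightCycle

lemma isBridge_of_not_connected {V : Type*} {G : SimpleGraph V} {x y : V} (hc : G.Connected)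
    (hcut : ¬ (G.deleteEdges {s(x, y)}).Connected) : G.IsBridge s(x, y) :=
  not_not.1 (mt hc.connected_delete_edge_of_not_isBridge hcut)

section LowerBound

variable {V : Type*} [Fintype V] {G : SimpleGraph V}

lemma IsCactus.sum_edgeFinset_eq {M : Type*} [AddCommMonoid M] (hG : IsCactus G)
    (g : Sym2 V → M) : ∑ e ∈ G.edgeFinset, g e =
      ∑ e ∈ G.edgeFinset with G.IsBridge e, g e + ∑ C ∈ cycleEdgeSets G, ∑ e ∈ C, g e := by
  have hcycles : {e ∈ G.edgeFinset | ¬ G.IsBridge e} = (cycleEdgeSets G).biUnion id := by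
    ext e
    simp only [mem_filter, mem_biUnion, mem_cycleEdgeSets, id]
    constructor
    · rintro ⟨he, hb⟩
      rw [isBridge_iff_notMem_cycleEdgeSet (SimpleGraph.mem_edgeFinset.1 he)] at hb
      push Not at hb
      exact hb
    · rintro ⟨C, hC, he⟩
      refine ⟨hC.subset_edgeFinset he, ?_⟩
      rw [isBridge_iff_notMem_cycleEdgeSet (hC.mem_edgeSet he)]
      exact fun h => h C hC he
  rw [← sum_filter_add_sum_filter_not _ G.IsBridge, hcycles,
    sum_biUnion hG.pairwiseDisjoint_cycleEdgeSets]
  rfl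

lemma IsCactus.szRevE_eq {x y : V} (hG : IsCactus G) (h : G.Adj x y) (hb : G.IsBridge s(x, y)) :
    szRevE G = (2 * (#G.edgeFinset : ℚ) ^ 2 - #G.edgeFinset) / 4 + (excess G s(x, y) +
      ∑ e ∈ {e ∈ G.edgeFinset | G.IsBridge e}.erase s(x, y), excess G e +
      ∑ C ∈ cycleEdgeSets G, ∑ e ∈ C, excess G e) := by
  rw [_root_.szRevE_eq hG.1, hG.sum_edgeFinset_eq,
    add_sum_erase _ _ (mem_filter.2 ⟨by simpa using h, hb⟩)]

lemma IsCactus.le_sum_excess {C : Finset (Sym2 V)} (hG : IsCactus G) (hm : 15 < #G.edgeFinset)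
    (hC : IsCycleEdgeSet G C) : (6 * #G.edgeFinset - 15 : ℚ) ≤ ∑ e ∈ C, excess G e :=
  have ⟨_, _, h⟩ := hG.exists_isBlockCycle hC
  h.quadrangle_excess_le hG.1 hm

lemma excess_nonneg_of_mem_bridges (hc : G.Connected) {x y : V} {e : Sym2 V}
    (he : e ∈ {e ∈ G.edgeFinset | G.IsBridge e}.erase s(x, y)) : 0 ≤ excess G e := by
  induction e with
  | _ u v => exact excess_nonneg hc (by simpa using (mem_filter.1 (mem_of_mem_erase he)).1)

lemma IsCactus.card_cycleEdgeSets_mul_le_sum_excess (hG : IsCactus G)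
    (hm : 15 < #G.edgeFinset) : (#(cycleEdgeSets G) : ℚ) * (6 * #G.edgeFinset - 15) ≤
      ∑ C ∈ cycleEdgeSets G, ∑ e ∈ C, excess G e := by
  rw [← nsmul_eq_mul]
  exact card_nsmul_le_sum _ _ _ fun C hC => hG.le_sum_excess hm (mem_cycleEdgeSets.1 hC)

theorem IsCactus.le_szRevE {x y a b : V} (hG : IsCactus G) (hm : 15 < #G.edgeFinset)
    (h : G.Adj x y) (hbr : G.IsBridge s(x, y)) (ha : G.Adj x a) (hb : G.Adj y b) (hay : a ≠ y)
    (hbx : b ≠ x) :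
    (2 * (#G.edgeFinset : ℚ) ^ 2 - #G.edgeFinset) / 4 +
      #(cycleEdgeSets G) * (6 * #G.edgeFinset - 15) + #G.edgeFinset - 2 ≤ szRevE G := by
  rw [hG.szRevE_eq h hbr]
  linarith [card_sub_two_le_excess hG.1 h ha hb hay hbx,
    hG.card_cycleEdgeSets_mul_le_sum_excess hm,
    sum_nonneg fun e (he : e ∈ {e ∈ G.edgeFinset | G.IsBridge e}.erase s(x, y)) =>
      excess_nonneg_of_mem_bridges hG.1 he]

theorem IsCactus.excess_eq_of_szRevE_le {x y a b : V} (hG : IsCactus G)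
    (hm : 15 < #G.edgeFinset) (h : G.Adj x y) (hbr : G.IsBridge s(x, y)) (ha : G.Adj x a)
    (hb : G.Adj y b) (hay : a ≠ y) (hbx : b ≠ x)
    (hle : szRevE G ≤ (2 * (#G.edgeFinset : ℚ) ^ 2 - #G.edgeFinset) / 4 +
      #(cycleEdgeSets G) * (6 * #G.edgeFinset - 15) + #G.edgeFinset - 2) :
    excess G s(x, y) = #G.edgeFinset - 2 ∧
      (∀ e ∈ G.edgeFinset, G.IsBridge e → e ≠ s(x, y) → excess G e = 0) ∧
      ∀ C, IsCycleEdgeSet G C → ∑ e ∈ C, excess G e = (6 * #G.edgeFinset - 15 : ℚ) := by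
  have hxy := card_sub_two_le_excess hG.1 h ha hb hay hbx
  have hbridges := sum_nonneg fun e
    (he : e ∈ {e ∈ G.edgeFinset | G.IsBridge e}.erase s(x, y)) =>
      excess_nonneg_of_mem_bridges hG.1 he
  have hcycles := hG.card_cycleEdgeSets_mul_le_sum_excess hm
  rw [hG.szRevE_eq h hbr] at hle
  refine ⟨by linarith, fun e he hbe hne => ?_, fun C hC => ?_⟩
  · exact (sum_eq_zero_iff_of_nonneg fun e he => excess_nonneg_of_mem_bridges hG.1 he).1
      (by linarith) e (mem_erase.2 ⟨hne, mem_filter.2 ⟨he, hbe⟩⟩)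
  · refine ((sum_eq_sum_iff_of_le fun C hC => hG.le_sum_excess hm (mem_cycleEdgeSets.1 hC)).1
      ?_ C (mem_cycleEdgeSets.2 hC)).symm
    rw [sum_const, nsmul_eq_mul]
    linarith

end LowerBound

section GStar

/-- The vertices of the graph `G*₁` with `k` quadrangles and `l` pendant edges at its hub, encoded
as in `GStar1`. -/
abbrev GStarVertex (k l : ℕ) : Type := Unit ⊕ ((Σ _ : Fin k, Fin 3) ⊕ (Fin l ⊕ Fin 2))

namespace GStarVertex

variable {k l : ℕ}

/-- The common vertex of the quadrangles. -/
abbrev hub : GStarVertex k l := .inl ()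

/-- The vertices of the `i`-th quadrangle in cyclic order, starting at the hub. -/
def quad (i : Fin k) : ZMod 4 → GStarVertex k l :=
  ![hub, .inr (.inl ⟨i, 0⟩), .inr (.inl ⟨i, 1⟩), .inr (.inl ⟨i, 2⟩)]

/-- The endpoint of the `j`-th pendant edge at the hub. -/
abbrev leaf (j : Fin l) : GStarVertex k l := .inr (.inr (.inl j))

/-- The middle vertex of the pendant path of length two at the hub. -/
abbrev mid : GStarVertex k l := .inr (.inr (.inr 0))

/-- The last vertex of the pendant path of length two at the hub. -/
abbrev tip : GStarVertex k l := .inr (.inr (.inr 1))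

lemma quad_injective (i : Fin k) : Function.Injective (quad (l := l) i) := by
  intro a b hab
  fin_cases a <;> fin_cases b <;> first | rfl | simp [quad] at hab

@[elab_as_elim]
lemma cases {P : GStarVertex k l → Prop} (hub : P hub)
    (quad : ∀ i (j : ZMod 4), j ≠ 0 → P (quad i j)) (leaf : ∀ j, P (leaf j)) (mid : P mid)
    (tip : P tip) (a : GStarVertex k l) : P a := by
  rcases a with _ | ⟨i, j⟩ | j | j
  · exact hub
  · fin_cases j
    exacts [quad i 1 (by decide), quad i 2 (by decide), quad i 3 (by decide)]
  · exact leaf j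
  · fin_cases j
    exacts [mid, tip]

end GStarVertex

open GStarVertex

/-- The adjacency relation of `G*₁`, with one orientation of each edge. -/
def GStarRel {k l : ℕ} (a b : GStarVertex k l) : Prop :=
  match a, b with
  | Sum.inl _, Sum.inr (Sum.inr (Sum.inl _)) => True
  | Sum.inl _, Sum.inr (Sum.inr (Sum.inr b)) => b.val = 0
  | Sum.inr (Sum.inr (Sum.inr a)), Sum.inr (Sum.inr (Sum.inr b)) => a.val = 0 ∧ b.val = 1
  | Sum.inl _, Sum.inr (Sum.inl ⟨_, a⟩) => a.val = 0 ∨ a.val = 2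
  | Sum.inr (Sum.inl ⟨i, a⟩), Sum.inr (Sum.inl ⟨j, b⟩) => i = j ∧ a.val + 1 = b.val
  | _, _ => False

/-- The graph `G*₁` with `k` quadrangles and `l` pendant edges at its hub. -/
def gStar (k l : ℕ) : SimpleGraph (GStarVertex k l) := SimpleGraph.fromRel GStarRel

lemma gStar_eq_gStar1 (n k : ℕ) : gStar k (n - 3 * k - 3) = GStar1 n k := by
  refine congrArg SimpleGraph.fromRel (funext₂ fun a b => ?_)
  rcases a with _ | _ | _ | _ <;> rcases b with _ | _ | _ | _ <;> rfl

variable {k l : ℕ} {a b : GStarVertex k l}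

lemma GStarRel.asymm (h : GStarRel a b) : ¬ GStarRel b a := by
  rcases a with _ | ⟨i, a⟩ | a | a <;> rcases b with _ | ⟨j, b⟩ | b | b <;>
    simp only [GStarRel, not_false_eq_true] at h ⊢ <;> omega

lemma gStar_adj : (gStar k l).Adj a b ↔ GStarRel a b ∨ GStarRel b a := by
  rw [gStar, SimpleGraph.fromRel_adj, and_iff_right_iff_imp]
  rintro h rfl
  exact (or_self_iff.1 h).asymm (or_self_iff.1 h)

lemma gStar_adj_leaf (j : Fin l) : (gStar k l).Adj (leaf j) b ↔ b = hub := by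
  rw [gStar_adj]
  rcases b with _ | ⟨i, b⟩ | b | b <;> simp [GStarRel]

lemma gStar_adj_tip : (gStar k l).Adj tip b ↔ b = mid := by
  rw [gStar_adj]
  rcases b with _ | ⟨i, b⟩ | b | b
  on_goal 4 => fin_cases b
  all_goals simp [GStarRel]

lemma gStar_adj_mid : (gStar k l).Adj mid b ↔ b = hub ∨ b = tip := by
  rw [gStar_adj]
  rcases b with _ | ⟨i, b⟩ | b | b
  on_goal 4 => fin_cases b
  all_goals simp [GStarRel]

lemma gStar_adj_quad (i : Fin k) {j : ZMod 4} (hj : j ≠ 0) :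
    (gStar k l).Adj (quad i j) b ↔ b = quad i (j + 1) ∨ b = quad i (j - 1) := by
  have hquad (t : Fin 3) : (gStar k l).Adj (.inr (.inl ⟨i, t⟩)) b ↔
      b = ![.inr (.inl ⟨i, 1⟩), .inr (.inl ⟨i, 2⟩), hub] t ∨
        b = ![hub, .inr (.inl ⟨i, 0⟩), .inr (.inl ⟨i, 1⟩)] t := by
    rw [gStar_adj]
    rcases b with _ | ⟨i', b⟩ | b | b <;> fin_cases t
    on_goal 4 => fin_cases b
    on_goal 7 => fin_cases b
    on_goal 10 => fin_cases b
    all_goals simp [GStarRel, eq_comm]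
  have hcases : ∀ j : ZMod 4, j ≠ 0 → j = 1 ∨ j = 2 ∨ j = 3 := by decide
  obtain rfl | rfl | rfl := hcases j hj
  exacts [hquad 0, hquad 1, hquad 2]

end GStar

open GStarVertex

section GStarSum

variable {V : Type*} {G : SimpleGraph V} {k l : ℕ}

lemma isOrientation_gStarRel (φ : gStar k l ≃g G) : IsOrientation G φ.toEquiv GStarRel where
  adj_iff _ _ := φ.map_adj_iff.trans gStar_adj
  asymm _ _ := GStarRel.asymm

lemma sum_edgeFinset_of_gStar_iso [Fintype V] {M : Type*} [AddCommMonoid M] (φ : gStar k l ≃g G)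
    (g : Sym2 V → M) : ∑ e ∈ G.edgeFinset, g e =
      ∑ i, ∑ j, g s(φ (quad i j), φ (quad i (j + 1))) + ∑ j, g s(φ hub, φ (leaf j)) +
        g s(φ hub, φ mid) + g s(φ mid, φ tip) := by
  have hquad (i : Fin k) : ∑ j, g s(φ (quad i j), φ (quad i (j + 1))) =
      g s(φ hub, φ (.inr (.inl ⟨i, 0⟩))) +
      g s(φ (.inr (.inl ⟨i, 0⟩)), φ (.inr (.inl ⟨i, 1⟩))) +
      g s(φ (.inr (.inl ⟨i, 1⟩)), φ (.inr (.inl ⟨i, 2⟩))) +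
      g s(φ hub, φ (.inr (.inl ⟨i, 2⟩))) := by
    rw [@Sym2.eq_swap _ (φ hub) (φ (.inr (.inl ⟨i, 2⟩)))]
    exact Fin.sum_univ_four _
  rw [(isOrientation_gStarRel φ).sum_edgeFinset]
  simp only [hquad, Fintype.sum_sum_type, Fintype.sum_sigma, Fin.sum_univ_three,
    Fin.sum_univ_two, GStarRel, sum_add_distrib]
  simp only [univ_unique, PUnit.default_eq_unit, ↓reduceIte, sum_const_zero, add_zero, Fin.isValue,
    Fin.coe_ofNat_eq_mod, Nat.zero_mod, OfNat.zero_ne_ofNat, or_false, RelIso.coe_fn_toEquiv,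
    sum_singleton, zero_add, one_ne_zero, and_false, Nat.one_mod, Nat.reduceAdd,
    OfNat.ofNat_ne_zero, Nat.mod_succ, OfNat.one_ne_ofNat, or_self, and_true, sum_ite_eq,
    mem_univ, OfNat.ofNat_ne_one, or_true, OfNat.ofNat_eq_ofNat, Nat.succ_ne_self, zero_ne_one,
    and_self]
  abel

end GStarSum

section Separation

variable {V : Type*} {G : SimpleGraph V} {S : Set V} {x s : V}

lemma dist_eq_dist_add_dist_of_separates (hc : G.Connected)
    (hS : ∀ s ∈ S, ∀ w, G.Adj s w → w ∈ S ∨ w = x) (hs : s ∈ S) {a : V} (ha : a ∉ S) :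
    G.dist a s = G.dist a x + G.dist x s := by
  refine hc.dist_triangle.antisymm ?_
  obtain ⟨p, hp⟩ := hc.exists_walk_length_eq_dist s a
  obtain ⟨d, hd, hfst, hsnd⟩ := p.exists_boundary_dart S hs ha
  have hx : x ∈ p.support :=
    (hS _ hfst _ d.adj).resolve_left hsnd ▸ p.dart_snd_mem_support_of_mem_darts hd
  have hlen := congrArg SimpleGraph.Walk.length (p.take_spec hx)
  rw [SimpleGraph.Walk.length_append] at hlen
  have hle := SimpleGraph.dist_le (p.takeUntil x hx)
  have hle' := SimpleGraph.dist_le (p.dropUntil x hx)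
  rw [G.dist_comm] at hle hle'
  rw [G.dist_comm (u := a) (v := s)]
  omega

lemma eDist_eq_eDist_add_dist_of_separates (hc : G.Connected)
    (hS : ∀ s ∈ S, ∀ w, G.Adj s w → w ∈ S ∨ w = x) (hs : s ∈ S) {f : Sym2 V}
    (hf : ∀ w ∈ f, w ∉ S) : eDist G f s = eDist G f x + G.dist x s := by
  induction f with
  | _ a b =>
    rw [eDist_mk, eDist_mk,
      dist_eq_dist_add_dist_of_separates hc hS hs (hf a (Sym2.mem_mk_left a b)),
      dist_eq_dist_add_dist_of_separates hc hS hs (hf b (Sym2.mem_mk_right a b)),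
      min_add_add_right]

lemma edgeTransmission_sub_eq_of_separates [Fintype V] {B : Finset (Sym2 V)} (hc : G.Connected)
    (hS : ∀ s ∈ S, ∀ w, G.Adj s w → s(s, w) ∈ B ∧ (w ∈ S ∨ w = x)) (hs : s ∈ S)
    (hB : B ⊆ G.edgeFinset) : edgeTransmission G s - edgeTransmission G x =
      (#G.edgeFinset - #B : ℚ) * G.dist x s + ∑ f ∈ B, ((eDist G f s : ℚ) - eDist G f x) := by
  have hf (f : Sym2 V) (hf : f ∈ G.edgeFinset \ B) :
      (eDist G f s : ℚ) - eDist G f x = G.dist x s := by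
    obtain ⟨hfE, hfB⟩ := mem_sdiff.1 hf
    rw [eDist_eq_eDist_add_dist_of_separates hc (fun s hs w hw => (hS s hs w hw).2) hs]
    · push_cast
      ring
    · intro w hw hwS
      obtain ⟨v, rfl⟩ := Sym2.mem_iff_exists.1 hw
      exact hfB (hS w hwS v (by simpa using hfE)).1
  rw [edgeTransmission_sub, ← sum_sdiff hB, sum_congr rfl hf, sum_const, nsmul_eq_mul,
    card_edgeFinset_sdiff hB]

end Separation

section QuadrangleAt

variable {V : Type*} {G : SimpleGraph V} {C : Finset (Sym2 V)} {c : ZMod 4 → V} {x : V}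

lemma IsCycleParam.isQuadrangleAt (h : IsCycleParam G C c) (hx : c 0 = x)
    (hC : ∀ i, i ≠ 0 → ∀ w, G.Adj (c i) w → s(c i, w) ∈ C) : IsQuadrangleAt G x C c where
  toIsCycleParam := h
  eq_of_reachable i j hij := by
    have hisolated (i : ZMod 4) (hi : i ≠ 0) (w : V) :
        ¬ (G.deleteEdges (C : Set (Sym2 V))).Adj (c i) w := fun hw =>
      ((SimpleGraph.deleteEdges_adj ..).1 hw).2 (hC i hi w (SimpleGraph.deleteEdges_le _ hw))
    have heq {i j : ZMod 4} (hi : i ≠ 0)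
        (hij : (G.deleteEdges (C : Set (Sym2 V))).Reachable (c i) (c j)) : i = j := by
      by_contra hne
      obtain ⟨p⟩ := hij
      exact hisolated i hi _ (p.adj_snd (p.not_nil_of_ne (h.injective.ne hne)))
    rcases eq_or_ne i 0 with rfl | hi
    · rcases eq_or_ne j 0 with rfl | hj
      exacts [rfl, (heq hj hij.symm).symm]
    · exact heq hi hij
  zero_eq := hx
  mem_of_adj := hC

lemma IsQuadrangleAt.dist_two (hc : G.Connected) (h : IsQuadrangleAt G x C c) :
    G.dist (c 0) (c 2) = 2 := by
  have hle : G.dist (c 0) (c 2) ≤ G.dist (c 0) (c 1) + G.dist (c 1) (c 2) := hc.dist_triangle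
  have hadj : G.Adj (c 0) (c 1) := h.adj 0
  have hadj' : G.Adj (c 1) (c 2) := h.adj 1
  rw [SimpleGraph.dist_eq_one_iff_adj.2 hadj, SimpleGraph.dist_eq_one_iff_adj.2 hadj'] at hle
  have hne : G.dist (c 0) (c 2) ≠ 0 := fun h0 =>
    absurd (h.injective (hc.dist_eq_zero_iff.1 h0)) (by decide)
  have hne' : G.dist (c 0) (c 2) ≠ 1 := fun h1 => by
    have hmem := h.mem_of_adj 2 (by decide) _ (SimpleGraph.dist_eq_one_iff_adj.1 h1).symm
    rcases (h.mk_mem_iff 2 _).1 hmem with heq | heq <;>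
      exact absurd (h.injective heq) (by decide)
  omega

end QuadrangleAt

section ExtremalExcess

variable {V : Type*} [Fintype V] {G : SimpleGraph V} {C : Finset (Sym2 V)} {x y z : V}

lemma IsLeafAt.edgeTransmission_sub_eq (hc : G.Connected) (h : IsLeafAt G x y) :
    edgeTransmission G y - edgeTransmission G x = #G.edgeFinset - 1 := by
  rw [edgeTransmission_sub_eq_of_separates (S := {y}) (B := {s(x, y)}) hc ?_ rfl
    (by simpa using h.adj), SimpleGraph.dist_eq_one_iff_adj.2 h.adj, sum_sub_distrib,
    sum_eDist_singleton_balanced hc x y]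
  · simp
  · rintro s rfl w hw
    obtain rfl := h.eq_of_adj w hw
    simp [Sym2.eq_swap]

lemma IsLeafAt.excess_eq_zero (hc : G.Connected) (h : IsLeafAt G x y) :
    excess G s(x, y) = 0 := by
  rw [Sym2.eq_swap, excess_mk, h.edgeTransmission_sub_eq hc, sub_self, zero_div]

lemma excess_eq_card_sub_two_of_pendant_path (hc : G.Connected) (h : G.Adj x y) (hxz : x ≠ z)
    (hy : ∀ w, G.Adj y w → w = x ∨ w = z) (hz : IsLeafAt G y z) :
    excess G s(x, y) = #G.edgeFinset - 2 := by
  have hne : s(x, y) ≠ s(y, z) := by simp [h.ne, hxz]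
  have hsub : edgeTransmission G y - edgeTransmission G x = #G.edgeFinset - 3 := by
    rw [edgeTransmission_sub_eq_of_separates (S := {y, z}) (B := {s(x, y), s(y, z)}) hc ?_
      (.inl rfl) (by simp [insert_subset_iff, h, hz.adj]), SimpleGraph.dist_eq_one_iff_adj.2 h,
      sum_pair hne, card_pair hne, (eDist_eq_zero_iff hc).2 (Sym2.mem_mk_left x y),
      (eDist_eq_zero_iff hc).2 (Sym2.mem_mk_right x y),
      (eDist_eq_zero_iff hc).2 (Sym2.mem_mk_left y z), eDist_eq_one_of_adj hc h.symm hxz]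
    · push_cast
      ring
    · rintro s (rfl | rfl) w hw
      · rcases hy w hw with rfl | rfl <;> simp [Sym2.eq_swap]
      · obtain rfl := hz.eq_of_adj w hw
        simp [Sym2.eq_swap]
  rw [Sym2.eq_swap, excess_mk, hsub]
  ring

namespace IsQuadrangleAt

variable {c : ZMod 4 → V}

lemma edgeTransmission_sub_eq (hc : G.Connected) (h : IsQuadrangleAt G x C c) {i : ZMod 4}
    (hi : i ≠ 0) : edgeTransmission G (c i) - edgeTransmission G (c 0) =
      (#G.edgeFinset - 4 : ℚ) * G.dist (c 0) (c i) := by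
  rw [edgeTransmission_sub_eq_of_separates (S := c '' {0}ᶜ) (B := C) hc ?_ ⟨i, hi, rfl⟩
    h.subset_edgeFinset, sum_sub_distrib, h.sum_eDist_eq hc i 0, sub_self, add_zero, h.card_eq,
    Nat.cast_ofNat]
  rintro _ ⟨j, hj, rfl⟩ w hw
  have hwC := h.mem_of_adj j hj w hw
  refine ⟨hwC, ?_⟩
  obtain ⟨t, rfl⟩ : ∃ t, c t = w := by
    rcases (h.mk_mem_iff j w).1 hwC with rfl | rfl <;> exact ⟨_, rfl⟩
  rcases eq_or_ne t 0 with rfl | ht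
  exacts [.inr rfl, .inl ⟨t, ht, rfl⟩]

lemma sum_excess_eq (hc : G.Connected) (h : IsQuadrangleAt G x C c) :
    ∑ e ∈ C, excess G e = (6 * #G.edgeFinset - 15 : ℚ) := by
  have hadj : G.Adj (c 0) (c 1) := h.adj 0
  have hadj' : G.Adj (c 0) (c 3) := (h.adj 3).symm
  have h1 := h.edgeTransmission_sub_eq hc (i := 1) (by decide)
  have h2 := h.edgeTransmission_sub_eq hc (i := 2) (by decide)
  have h3 := h.edgeTransmission_sub_eq hc (i := 3) (by decide)
  rw [SimpleGraph.dist_eq_one_iff_adj.2 hadj, sub_eq_iff_eq_add] at h1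
  rw [h.dist_two hc, sub_eq_iff_eq_add] at h2
  rw [SimpleGraph.dist_eq_one_iff_adj.2 hadj', sub_eq_iff_eq_add] at h3
  have hsum : ∑ i, (edgeTransmission G (c i) - edgeTransmission G (c (i + 1))) ^ 2 =
      (edgeTransmission G (c 0) - edgeTransmission G (c 1)) ^ 2 +
      (edgeTransmission G (c 1) - edgeTransmission G (c 2)) ^ 2 +
      (edgeTransmission G (c 2) - edgeTransmission G (c 3)) ^ 2 +
      (edgeTransmission G (c 3) - edgeTransmission G (c 0)) ^ 2 := Fin.sum_univ_four _
  rw [h.toIsBlockCycle.sum_excess_eq, hsum, h1, h2, h3]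
  push_cast
  ring

end IsQuadrangleAt

end ExtremalExcess

section SzRevEGStar

variable {V : Type*} {G : SimpleGraph V} {k l : ℕ}

lemma isLeafAt_hub_leaf (φ : gStar k l ≃g G) (j : Fin l) : IsLeafAt G (φ hub) (φ (leaf j)) where
  adj := φ.map_adj_iff.2 ((gStar_adj_leaf j).2 rfl).symm
  eq_of_adj w hw := by
    obtain ⟨b, rfl⟩ := φ.surjective w
    rw [(gStar_adj_leaf j).1 (φ.map_adj_iff.1 hw)]

lemma isLeafAt_mid_tip (φ : gStar k l ≃g G) : IsLeafAt G (φ mid) (φ tip) where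
  adj := φ.map_adj_iff.2 (gStar_adj_tip.2 rfl).symm
  eq_of_adj w hw := by
    obtain ⟨b, rfl⟩ := φ.surjective w
    rw [gStar_adj_tip.1 (φ.map_adj_iff.1 hw)]

lemma isQuadrangleAt_hub_quad (φ : gStar k l ≃g G) (i : Fin k) :
    IsQuadrangleAt G (φ hub) (univ.image fun j => s(φ (quad i j), φ (quad i (j + 1))))
      fun j => φ (quad i j) := by
  have hadj (j : ZMod 4) : (gStar k l).Adj (quad i j) (quad i (j + 1)) := by
    rcases eq_or_ne j 0 with rfl | hj
    · exact ((gStar_adj_quad i (j := 1) (by decide)).2 (.inr rfl)).symm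
    · exact (gStar_adj_quad i hj).2 (.inl rfl)
  have hparam : IsCycleParam G (univ.image fun j => s(φ (quad i j), φ (quad i (j + 1))))
      fun j => φ (quad i j) :=
    { three_le := by norm_num
      injective := φ.injective.comp (quad_injective i)
      adj := fun j => φ.map_adj_iff.2 (hadj j)
      mem_iff := fun e => by simp [eq_comm] }
  refine hparam.isQuadrangleAt rfl fun j hj w hw => ?_
  obtain ⟨b, rfl⟩ := φ.surjective w
  rw [hparam.mk_mem_iff]
  exact ((gStar_adj_quad i hj).1 (φ.map_adj_iff.1 hw)).imp (congrArg φ) (congrArg φ)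

theorem szRevE_eq_of_gStar_iso [Fintype V] (hc : G.Connected) (φ : gStar k l ≃g G) :
    szRevE G = (2 * (#G.edgeFinset : ℚ) ^ 2 - #G.edgeFinset) / 4 +
      k * (6 * #G.edgeFinset - 15) + #G.edgeFinset - 2 := by
  have hmid : G.Adj (φ hub) (φ mid) := φ.map_adj_iff.2 (gStar_adj_mid.2 (.inl rfl)).symm
  have hne : φ hub ≠ φ tip := φ.injective.ne (by simp)
  have hmid' (w : V) (hw : G.Adj (φ mid) w) : w = φ hub ∨ w = φ tip := by
    obtain ⟨b, rfl⟩ := φ.surjective w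
    exact (gStar_adj_mid.1 (φ.map_adj_iff.1 hw)).imp (congrArg φ) (congrArg φ)
  have hquad (i : Fin k) : ∑ j, excess G s(φ (quad i j), φ (quad i (j + 1))) =
      (6 * #G.edgeFinset - 15 : ℚ) := by
    rw [← (isQuadrangleAt_hub_quad φ i).sum_eq, (isQuadrangleAt_hub_quad φ i).sum_excess_eq hc]
  rw [szRevE_eq hc, sum_edgeFinset_of_gStar_iso φ,
    sum_congr rfl fun i _ => hquad i,
    sum_congr rfl fun j _ => (isLeafAt_hub_leaf φ j).excess_eq_zero hc,
    excess_eq_card_sub_two_of_pendant_path hc hmid hne hmid' (isLeafAt_mid_tip φ),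
    (isLeafAt_mid_tip φ).excess_eq_zero hc, sum_const, card_univ, Fintype.card_fin, nsmul_eq_mul,
    sum_const_zero]
  ring

end SzRevEGStar

section LocalIso

variable {V W : Type*} {G : SimpleGraph V} {H : SimpleGraph W}

lemma nonempty_iso_of_injective_of_adj_iff [Nonempty W] (hG : G.Preconnected) {f : W → V}
    (hf : Function.Injective f) (hadj : ∀ a w, G.Adj (f a) w ↔ ∃ b, H.Adj a b ∧ f b = w) :
    Nonempty (H ≃g G) := by
  have hsurj (w : V) : w ∈ Set.range f := by
    obtain ⟨a⟩ := ‹Nonempty W›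
    obtain ⟨p⟩ := hG w (f a)
    generalize hv : f a = v at p
    induction p with
    | nil => exact ⟨a, hv⟩
    | cons h _ ih =>
      obtain ⟨b, rfl⟩ := ih hv
      obtain ⟨b', -, rfl⟩ := (hadj b _).1 h.symm
      exact ⟨b', rfl⟩
  refine ⟨⟨Equiv.ofBijective f ⟨hf, hsurj⟩, fun {a b} => (hadj a (f b)).trans ?_⟩⟩
  simp only [hf.eq_iff, exists_eq_right]

end LocalIso

section StarBundle

variable {V : Type*} {G : SimpleGraph V} {x y z : V}

lemma IsCycleParam.not_isLeafAt {C : Finset (Sym2 V)} {r : ℕ} {c : ZMod r → V}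
    (h : IsCycleParam G C c) (i : ZMod r) : ¬ IsLeafAt G x (c i) := fun hleaf => by
  have hsub : G.Adj (c i) (c (i - 1)) := by simpa using (h.adj (i - 1)).symm
  exact h.add_one_ne_sub_one i (h.injective <|
    (hleaf.eq_of_adj _ (h.adj i)).trans (hleaf.eq_of_adj _ hsub).symm)

lemma IsQuadrangleAt.adj_iff {C : Finset (Sym2 V)} {c : ZMod 4 → V}
    (h : IsQuadrangleAt G x C c) {i : ZMod 4} (hi : i ≠ 0) (w : V) :
    G.Adj (c i) w ↔ w = c (i + 1) ∨ w = c (i - 1) := by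
  refine ⟨fun hw => (h.mk_mem_iff i w).1 (h.mem_of_adj i hi w hw), ?_⟩
  rintro (rfl | rfl)
  · exact h.adj i
  · simpa using (h.adj (i - 1)).symm

variable {k l : ℕ} {C : Fin k → Finset (Sym2 V)} {q : Fin k → ZMod 4 → V} {L : Fin l → V}

/-- The edges at `x` and `y` are arranged as in `G*₁` with hub `x` and pendant path `x`, `y`, `z`:
the quadrangles `q i` have edge sets `C i`, and the pendant edges end in `L j`. -/
structure IsStarBundle (G : SimpleGraph V) (x y z : V) (C : Fin k → Finset (Sym2 V))
    (q : Fin k → ZMod 4 → V) (L : Fin l → V) : Prop where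
  isQuadrangleAt : ∀ i, IsQuadrangleAt G x (C i) (q i)
  eq_of_mem : ∀ i j e, e ∈ C i → e ∈ C j → i = j
  isLeafAt : ∀ j, IsLeafAt G x (L j)
  leaf_injective : Function.Injective L
  adj : G.Adj x y
  notMem : ∀ i, s(x, y) ∉ C i
  isLeafAt_tip : IsLeafAt G y z
  tip_ne : z ≠ x
  eq_or_eq : ∀ w, G.Adj y w → w = x ∨ w = z
  covers : ∀ w, G.Adj x w → w = y ∨ (∃ j, L j = w) ∨ ∃ i, s(x, w) ∈ C i

namespace IsStarBundle

/-- The map from the vertices of `G*₁` to those of a graph in which its parts have been found. -/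
def map (x y z : V) (q : Fin k → ZMod 4 → V) (L : Fin l → V) : GStarVertex k l → V :=
  Sum.elim (fun _ => x) (Sum.elim (fun p => q p.1 (![1, 2, 3] p.2)) (Sum.elim L ![y, z]))

lemma map_quad (h : IsStarBundle G x y z C q L) (i : Fin k) (j : ZMod 4) :
    map x y z q L (quad i j) = q i j := by
  fin_cases j
  exacts [(h.isQuadrangleAt i).zero_eq.symm, rfl, rfl, rfl]

lemma adj_map_iff_of_ne_hub (h : IsStarBundle G x y z C q L) {a : GStarVertex k l} (ha : a ≠ hub)
    (w : V) : G.Adj (map x y z q L a) w ↔ ∃ b, (gStar k l).Adj a b ∧ map x y z q L b = w := by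
  induction a using GStarVertex.cases with
  | hub => exact absurd rfl ha
  | quad i j hj =>
    simp only [h.map_quad, (h.isQuadrangleAt i).adj_iff hj, gStar_adj_quad i hj, or_and_right,
      exists_or, exists_eq_left, eq_comm]
  | leaf j =>
    simp only [gStar_adj_leaf, exists_eq_left]
    exact ⟨fun hw => ((h.isLeafAt j).eq_of_adj w hw).symm,
      fun hw => hw ▸ (h.isLeafAt j).adj.symm⟩
  | mid =>
    simp only [gStar_adj_mid, or_and_right, exists_or, exists_eq_left]
    refine ⟨fun hw => (h.eq_or_eq w hw).imp Eq.symm Eq.symm, ?_⟩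
    rintro (rfl | rfl)
    exacts [h.adj.symm, h.isLeafAt_tip.adj]
  | tip =>
    simp only [gStar_adj_tip, exists_eq_left]
    exact ⟨fun hw => (h.isLeafAt_tip.eq_of_adj w hw).symm, fun hw => hw ▸ h.isLeafAt_tip.adj.symm⟩

lemma adj_map_iff (h : IsStarBundle G x y z C q L) (a : GStarVertex k l) (w : V) :
    G.Adj (map x y z q L a) w ↔ ∃ b, (gStar k l).Adj a b ∧ map x y z q L b = w := by
  rcases eq_or_ne a hub with rfl | ha
  · constructor
    · intro hw
      obtain rfl | ⟨j, rfl⟩ | ⟨i, hi⟩ := h.covers w hw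
      · exact ⟨mid, (gStar_adj_mid.2 (.inl rfl)).symm, rfl⟩
      · exact ⟨leaf j, ((gStar_adj_leaf j).2 rfl).symm, rfl⟩
      · rw [← (h.isQuadrangleAt i).zero_eq, (h.isQuadrangleAt i).mk_mem_iff] at hi
        rcases hi with rfl | rfl
        · exact ⟨quad i 1, ((gStar_adj_quad i (j := 1) (by decide)).2 (.inr rfl)).symm,
            h.map_quad i 1⟩
        · exact ⟨quad i 3, ((gStar_adj_quad i (j := 3) (by decide)).2 (.inl rfl)).symm,
            h.map_quad i 3⟩
    · rintro ⟨b, hb, rfl⟩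
      exact ((h.adj_map_iff_of_ne_hub hb.ne' _).2 ⟨hub, hb.symm, rfl⟩).symm
  · exact h.adj_map_iff_of_ne_hub ha w

variable {a : GStarVertex k l}

lemma eq_hub (h : IsStarBundle G x y z C q L) (ha : map x y z q L a = x) : a = hub := by
  induction a using GStarVertex.cases with
  | hub => rfl
  | quad i j hj =>
    rw [h.map_quad, ← (h.isQuadrangleAt i).zero_eq] at ha
    exact absurd ((h.isQuadrangleAt i).injective ha) hj
  | leaf j => exact absurd ha (h.isLeafAt j).adj.ne'
  | mid => exact absurd ha h.adj.ne'
  | tip => exact absurd ha h.tip_ne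

lemma eq_mid (h : IsStarBundle G x y z C q L) (ha : map x y z q L a = y) : a = mid := by
  induction a using GStarVertex.cases with
  | hub => exact absurd ha h.adj.ne
  | quad i j hj =>
    rw [h.map_quad] at ha
    subst ha
    exact absurd (Sym2.eq_swap ▸ (h.isQuadrangleAt i).mem_of_adj j hj x h.adj.symm) (h.notMem i)
  | leaf j =>
    have hL : L j = y := ha
    exact absurd ((hL ▸ h.isLeafAt j).eq_of_adj z h.isLeafAt_tip.adj) h.tip_ne
  | mid => rfl
  | tip => exact absurd ha h.isLeafAt_tip.adj.ne'

lemma eq_tip (h : IsStarBundle G x y z C q L) (ha : map x y z q L a = z) : a = tip := by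
  induction a using GStarVertex.cases with
  | hub => exact absurd ha h.tip_ne.symm
  | quad i j _ =>
    rw [h.map_quad] at ha
    exact absurd (ha ▸ h.isLeafAt_tip) ((h.isQuadrangleAt i).not_isLeafAt j)
  | leaf j =>
    have hL : L j = z := ha
    exact absurd ((hL ▸ h.isLeafAt j).eq_of_adj y h.isLeafAt_tip.adj.symm) h.adj.ne'
  | mid => exact absurd ha h.isLeafAt_tip.adj.ne
  | tip => rfl

lemma eq_leaf (h : IsStarBundle G x y z C q L) {j : Fin l} (ha : map x y z q L a = L j) :
    a = leaf j := by
  induction a using GStarVertex.cases with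
  | hub => exact absurd ha (h.isLeafAt j).adj.ne
  | quad i t _ =>
    rw [h.map_quad] at ha
    exact absurd (ha ▸ h.isLeafAt j) ((h.isQuadrangleAt i).not_isLeafAt t)
  | leaf t => rw [h.leaf_injective ha]
  | mid => exact (h.eq_mid (a := leaf j) ha.symm).symm
  | tip => exact (h.eq_tip (a := leaf j) ha.symm).symm

lemma eq_quad (h : IsStarBundle G x y z C q L) {i : Fin k} {j : ZMod 4} (hj : j ≠ 0)
    (ha : map x y z q L a = q i j) : a = quad i j := by
  induction a using GStarVertex.cases with
  | hub => exact (h.eq_hub (a := quad i j) ((h.map_quad i j).trans ha.symm)).symm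
  | quad t s _ =>
    rw [h.map_quad] at ha
    have hmem : s(q t s, q t (s + 1)) ∈ C i :=
      ha ▸ (h.isQuadrangleAt i).mem_of_adj j hj _ (ha ▸ (h.isQuadrangleAt t).adj s)
    obtain rfl := h.eq_of_mem t i _ ((h.isQuadrangleAt t).edge_mem s) hmem
    rw [(h.isQuadrangleAt t).injective ha]
  | leaf t => exact (h.eq_leaf (a := quad i j) ((h.map_quad i j).trans ha.symm)).symm
  | mid => exact (h.eq_mid (a := quad i j) ((h.map_quad i j).trans ha.symm)).symm
  | tip => exact (h.eq_tip (a := quad i j) ((h.map_quad i j).trans ha.symm)).symm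

lemma map_injective (h : IsStarBundle G x y z C q L) :
    Function.Injective (map x y z q L) := by
  intro a b hab
  induction b using GStarVertex.cases with
  | hub => exact h.eq_hub hab
  | quad i j hj => exact h.eq_quad hj (hab.trans (h.map_quad i j))
  | leaf j => exact h.eq_leaf hab
  | mid => exact h.eq_mid hab
  | tip => exact h.eq_tip hab

theorem nonempty_iso (hc : G.Connected) (h : IsStarBundle G x y z C q L) :
    Nonempty (gStar k l ≃g G) :=
  nonempty_iso_of_injective_of_adj_iff hc.preconnected h.map_injective h.adj_map_iff

end IsStarBundle

end StarBundle

section Equality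

variable {V : Type*} {G : SimpleGraph V} {x y z : V}

lemma IsCycleEdgeSet.exists_ne_mk_mem {C : Finset (Sym2 V)} (hC : IsCycleEdgeSet G C)
    (h : s(y, z) ∈ C) : ∃ w, w ≠ z ∧ s(y, w) ∈ C := by
  obtain ⟨r, c, hc⟩ := hC.exists_isCycleParam
  obtain ⟨i, hi⟩ := (hc.mem_iff _).1 h
  rcases Sym2.eq_iff.1 hi with ⟨rfl, rfl⟩ | ⟨rfl, rfl⟩
  · exact ⟨c (i - 1), hc.injective.ne (hc.add_one_ne_sub_one i).symm,
      (hc.mk_mem_iff i _).2 (.inr rfl)⟩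
  · refine ⟨c (i + 1 + 1), fun heq => hc.add_one_ne_sub_one (i + 1) ?_, hc.edge_mem (i + 1)⟩
    rw [hc.injective heq, add_sub_cancel_right]

lemma isBridge_of_forall_adj (hxy : G.IsBridge s(x, y)) (h : G.Adj x y) (hyz : G.Adj y z)
    (hzx : z ≠ x) (hy : ∀ w, G.Adj y w → w = x ∨ w = z) : G.IsBridge s(y, z) := by
  rw [isBridge_iff_notMem_cycleEdgeSet hyz]
  intro C hC hmem
  obtain ⟨w, hwz, hw⟩ := hC.exists_ne_mk_mem hmem
  obtain rfl := (hy w (hC.mem_edgeSet hw)).resolve_right hwz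
  exact (isBridge_iff_notMem_cycleEdgeSet h).1 hxy C hC (Sym2.eq_swap ▸ hw)

variable [Fintype V]

lemma isLeafAt_of_excess_bridge_eq_zero (hc : G.Connected)
    (hbridge : ∀ e ∈ G.edgeFinset, G.IsBridge e → e ≠ s(x, y) → excess G e = 0)
    (hxy : G.Adj x y) {w : V} (hw : G.Adj x w) (hb : G.IsBridge s(x, w)) (hwy : w ≠ y) :
    IsLeafAt G x w := by
  have hne : s(x, w) ≠ s(x, y) := fun heq => hwy (Sym2.congr_right.1 heq)
  refine (isLeafAt_of_excess_eq_zero hc hw (hbridge _ (by simpa using hw) hb hne)).resolve_left ?_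
  exact fun hleaf => hwy (hleaf.eq_of_adj y hxy).symm

theorem IsCactus.exists_isStarBundle (hG : IsCactus G) (hm : 15 < #G.edgeFinset)
    (h : G.Adj x y) (hxy : G.IsBridge s(x, y)) (hyz : G.Adj y z) (hzx : z ≠ x)
    (hy : ∀ w, G.Adj y w → w = x ∨ w = z)
    (hbridge : ∀ e ∈ G.edgeFinset, G.IsBridge e → e ≠ s(x, y) → excess G e = 0)
    (hcycle : ∀ C, IsCycleEdgeSet G C → ∑ e ∈ C, excess G e = (6 * #G.edgeFinset - 15 : ℚ)) :
    ∃ (k l : ℕ) (C : Fin k → Finset (Sym2 V)) (q : Fin k → ZMod 4 → V) (L : Fin l → V),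
      IsStarBundle G x y z C q L := by
  let cyclesAt : Finset (Finset (Sym2 V)) := {C ∈ cycleEdgeSets G | ∃ w, s(x, w) ∈ C}
  let leavesAt : Finset V := {w | IsLeafAt G x w}
  have hcyc (C : cyclesAt) : IsCycleEdgeSet G C := mem_cycleEdgeSets.1 (mem_filter.1 C.2).1
  have hnotMem {C : Finset (Sym2 V)} (hC : IsCycleEdgeSet G C) : s(x, y) ∉ C :=
    (isBridge_iff_notMem_cycleEdgeSet h).1 hxy C hC
  have hquad (C : cyclesAt) : ∃ c, IsQuadrangleAt G x C c :=
    have ⟨_, hw⟩ := (mem_filter.1 C.2).2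
    hG.exists_isQuadrangleAt (hcyc C) hm (hcycle C (hcyc C)) hw h (hnotMem (hcyc C))
  choose q hq using hquad
  refine ⟨_, _, fun i => cyclesAt.equivFin.symm i, fun i => q (cyclesAt.equivFin.symm i),
    fun j => leavesAt.equivFin.symm j, ?_⟩
  exact
  { isQuadrangleAt := fun i => hq _
    eq_of_mem := fun i j e hi hj => cyclesAt.equivFin.symm.injective <| Subtype.ext <|
      hG.cycleEdgeSet_eq (hcyc _) (hcyc _) hi hj
    isLeafAt := fun j => (mem_filter.1 (leavesAt.equivFin.symm j).2).2
    leaf_injective := Subtype.val_injective.comp leavesAt.equivFin.symm.injective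
    adj := h
    notMem := fun i => hnotMem (hcyc _)
    isLeafAt_tip := by
      have hb := isBridge_of_forall_adj hxy h hyz hzx hy
      rw [Sym2.eq_swap] at hbridge
      exact isLeafAt_of_excess_bridge_eq_zero hG.1 hbridge h.symm hyz hb hzx
    tip_ne := hzx
    eq_or_eq := hy
    covers := fun w hw => by
      by_cases hb : G.IsBridge s(x, w)
      · refine or_iff_not_imp_left.2 fun hwy => .inl ?_
        have hleaf := isLeafAt_of_excess_bridge_eq_zero hG.1 hbridge h hw hb hwy
        exact ⟨leavesAt.equivFin ⟨w, by simpa [leavesAt] using hleaf⟩, by simp⟩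
      · rw [isBridge_iff_notMem_cycleEdgeSet hw] at hb
        push Not at hb
        obtain ⟨C, hC, hwC⟩ := hb
        have hmem : C ∈ cyclesAt := mem_filter.2 ⟨mem_cycleEdgeSets.2 hC, w, hwC⟩
        exact .inr (.inr ⟨cyclesAt.equivFin ⟨C, hmem⟩, by simpa using hwC⟩) }

theorem IsCactus.exists_gStar_iso {a b : V} (hG : IsCactus G) (hm : 15 < #G.edgeFinset)
    (h : G.Adj x y) (hbr : G.IsBridge s(x, y)) (ha : G.Adj x a) (hb : G.Adj y b) (hay : a ≠ y)
    (hbx : b ≠ x)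
    (hle : szRevE G ≤ (2 * (#G.edgeFinset : ℚ) ^ 2 - #G.edgeFinset) / 4 +
      #(cycleEdgeSets G) * (6 * #G.edgeFinset - 15) + #G.edgeFinset - 2) :
    ∃ k l, Nonempty (gStar k l ≃g G) := by
  obtain ⟨hexcess, hbridge, hcycle⟩ := hG.excess_eq_of_szRevE_le hm h hbr ha hb hay hbx hle
  rcases eq_or_eq_of_excess_eq_card_sub_two hG.1 h ha hb hay hbx hexcess with hx | hy
  · rw [Sym2.eq_swap] at hbr hbridge
    obtain ⟨k, l, _, _, _, hbundle⟩ :=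
      hG.exists_isStarBundle hm h.symm hbr ha hay hx hbridge hcycle
    exact ⟨k, l, hbundle.nonempty_iso hG.1⟩
  · obtain ⟨k, l, _, _, _, hbundle⟩ := hG.exists_isStarBundle hm h hbr hb hbx hy hbridge hcycle
    exact ⟨k, l, hbundle.nonempty_iso hG.1⟩

lemma card_vertices_of_gStar_iso {k l : ℕ} (φ : gStar k l ≃g G) :
    Fintype.card V = 3 * k + l + 3 := by
  rw [← Fintype.card_congr φ.toEquiv]
  simp only [Fintype.card_sum, Fintype.card_unique, Fintype.card_sigma, Fintype.card_fin,
    sum_const, card_univ, smul_eq_mul]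
  omega

lemma card_edgeFinset_of_gStar_iso {k l : ℕ} (φ : gStar k l ≃g G) :
    #G.edgeFinset = 4 * k + l + 2 := by
  rw [card_eq_sum_ones, sum_edgeFinset_of_gStar_iso φ]
  simp only [sum_const, card_univ, ZMod.card, smul_eq_mul, mul_one, Fintype.card_fin,
    Nat.add_right_cancel_iff]
  omega

theorem nonempty_iso_gStar1_of_gStar_iso {k k' l n : ℕ} (hn : Fintype.card V = n)
    (hkm : #G.edgeFinset = n - 1 + k) (φ : gStar k' l ≃g G) : Nonempty (G ≃g GStar1 n k) := by
  have hV := card_vertices_of_gStar_iso φ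
  have hE := card_edgeFinset_of_gStar_iso φ
  obtain rfl : k' = k := by omega
  obtain rfl : l = n - 3 * k' - 3 := by omega
  rw [← gStar_eq_gStar1]
  exact ⟨φ.symm⟩

end Equality

theorem stmt17_general {V : Type*} [Fintype V] (G : SimpleGraph V) (hG : IsCactus G)
    (n k m : ℕ) (hn : Fintype.card V = n) (hm : G.edgeFinset.card = m)
    (hkm : m = n - 1 + k) (h15 : 15 < m)
    (x y : V) (hxy : G.Adj x y) (hcut : ¬ (G.deleteEdges {s(x, y)}).Connected)
    (hdx : 2 ≤ G.degree x) (hdy : 2 ≤ G.degree y) :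
    (2 * (m : ℚ) ^ 2 - m) / 4 + k * (6 * (m : ℚ) - 15) + m - 2 ≤ szRevE G ∧
    (szRevE G = (2 * (m : ℚ) ^ 2 - m) / 4 + k * (6 * (m : ℚ) - 15) + m - 2 ↔
      Nonempty (G ≃g GStar1 n k)) := by
  subst hm
  have hbr := isBridge_of_not_connected hG.1 hcut
  obtain ⟨a, ha, hay⟩ := exists_mem_ne hdx y
  obtain ⟨b, hb, hbx⟩ := exists_mem_ne hdy x
  rw [SimpleGraph.mem_neighborFinset] at ha hb
  have hk : (k : ℚ) ≤ #(cycleEdgeSets G) := by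
    have := card_edgeFinset_add_one_le hG.1
    exact_mod_cast (by omega)
  have h15' : (15 : ℚ) < #G.edgeFinset := by exact_mod_cast h15
  have hcycles := mul_le_mul_of_nonneg_right hk (by linarith : 0 ≤ (6 * #G.edgeFinset - 15 : ℚ))
  refine ⟨by linarith [hG.le_szRevE h15 hxy hbr ha hb hay hbx], fun heq => ?_, ?_⟩
  · obtain ⟨k', l, ⟨φ⟩⟩ := hG.exists_gStar_iso h15 hxy hbr ha hb hay hbx (by linarith)
    exact nonempty_iso_gStar1_of_gStar_iso hn hkm φ
  · rintro ⟨φ⟩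
    rw [← gStar_eq_gStar1] at φ
    exact szRevE_eq_of_gStar_iso hG.1 φ.symm

/-- a cactus with `k` cycles and `m` edges (`m > 15`, `m > 4k`) that has a
cut edge which is not a pendant edge satisfies
`Sz*ₑ(G) ≥ f(4,…,4) + m − 2 = (2m² − m)/4 + k(6m − 15) + m − 2`, with equality iff
`G ≅ G*₁`. -/
theorem stmt17 {V : Type*} [Fintype V] (G : SimpleGraph V) (hG : IsCactus G)
    (n k m : ℕ) (hn : Fintype.card V = n) (hm : G.edgeFinset.card = m)
    (hkm : m = n - 1 + k) (h15 : 15 < m) (h4k : 4 * k < m)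
    (x y : V) (hxy : G.Adj x y) (hcut : ¬ (G.deleteEdges {s(x, y)}).Connected)
    (hdx : 2 ≤ G.degree x) (hdy : 2 ≤ G.degree y) :
    (2 * (m : ℚ) ^ 2 - m) / 4 + k * (6 * (m : ℚ) - 15) + m - 2 ≤ szRevE G ∧
    (szRevE G = (2 * (m : ℚ) ^ 2 - m) / 4 + k * (6 * (m : ℚ) - 15) + m - 2 ↔
      Nonempty (G ≃g GStar1 n k)) :=
  stmt17_general G hG n k m hn hm hkm h15 x y hxy hcut hdx hdy
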